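/- arXiv:2210.16581 — 2 statements merged into one kernel-verified Lean document; each statement's English description precedes it below -/
import Mathlib

section
/- For the alternating layered ansatz on n = mκ qubits with L layers, whose m-qubit unitary blocks are independently Haar-random (2-designs), the variance of the fidelity kernel Tr[U ρ₀ U† σ] (with ρ₀ pure and σ a fixed state) over all blocks of U satisfies Var[k_Q] ≤ 2^κ/(2^{2m}−1)^κ − 1/2^{2n}, which is approximately 2^{−n(2 − 1/m)} for 2^m ≫ 1. -/
open MeasureTheory Matrix
open scoped ComplexOrder

/-- Embed an `m`-qubit operator `W` so that it acts on the qubits listed by `pos`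
(and as the identity on all other qubits) of an `n`-qubit register. -/
noncomputable def embedBlock {n m : ℕ} (pos : Fin m → Fin n)
    (W : Matrix (Fin m → Bool) (Fin m → Bool) ℂ) :
    Matrix (Fin n → Bool) (Fin n → Bool) ℂ :=
  fun i j =>
    if ∀ q : Fin n, q ∉ Set.range pos → i q = j q then W (i ∘ pos) (j ∘ pos) else 0

/-- Qubit positions of the `k`-th `m`-qubit block in the `d`-th layer of the alternating
layered ansatz on `m·κ` qubits: consecutive blocks of `m` qubits, cyclically shifted by
`m/2` in every other layer (so that each block overlaps `m/2` qubits of each of the two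
neighbouring blocks of the previous layer). -/
def blockPos (m κ : ℕ) (h : 0 < m * κ) (d k : ℕ) (t : Fin m) : Fin (m * κ) :=
  ⟨(k * m + d % 2 * (m / 2) + t.val) % (m * κ), Nat.mod_lt _ h⟩

/-- The alternating layered ansatz: the product over `L` layers of the `κ` embedded
`m`-qubit unitary blocks of each layer. -/
noncomputable def alaCircuit (m κ L : ℕ) (h : 0 < m * κ)
    (Ws : Fin L → Fin κ → Matrix (Fin m → Bool) (Fin m → Bool) ℂ) :
    Matrix (Fin (m * κ) → Bool) (Fin (m * κ) → Bool) ℂ :=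
  (List.finRange L).foldl
    (fun M d =>
      ((List.finRange κ).foldl
        (fun N k => embedBlock (blockPos m κ h d.val k.val) (Ws d k) * N) 1) * M) 1


set_option linter.unusedSectionVars false

section HaarFacts

lemma unitary_compactSpace (ι : Type) [Fintype ι] [DecidableEq ι] :
    CompactSpace (Matrix.unitaryGroup ι ℂ) := by
  refine (isCompact_iff_compactSpace (s := {U : Matrix ι ι ℂ | U ∈ Matrix.unitaryGroup ι ℂ})).mp ?_
  have hK : IsCompact (Set.pi Set.univ (fun _ : ι => Set.pi Set.univ
      (fun _ : ι => Metric.closedBall (0 : ℂ) 1))) :=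
    isCompact_univ_pi (fun _ => isCompact_univ_pi (fun _ => isCompact_closedBall _ _))
  refine IsCompact.of_isClosed_subset (X := Matrix ι ι ℂ) hK ?_ ?_
  · exact isClosed_unitary
  · intro U hU i _ j _
    simpa using entry_norm_bound_of_unitary hU i j

lemma unitary_secondCountable (ι : Type) [Fintype ι] [DecidableEq ι] :
    SecondCountableTopology (Matrix.unitaryGroup ι ℂ) := by
  have : SecondCountableTopology (Matrix ι ι ℂ) :=
    inferInstanceAs (SecondCountableTopology (ι → ι → ℂ))
  exact TopologicalSpace.Subtype.secondCountableTopology _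

attribute [local instance] unitary_compactSpace unitary_secondCountable

lemma continuous_integrable {X E : Type*} [TopologicalSpace X] [CompactSpace X] [MeasurableSpace X]
    [BorelSpace X] (μ : Measure X) [IsFiniteMeasure μ] [NormedAddCommGroup E] 
    [SecondCountableTopology E] {f : X → E} (hf : Continuous f) : Integrable f μ := by
  borelize E
  obtain ⟨C, hC⟩ := (isCompact_range hf).isBounded.exists_norm_le
  exact Integrable.of_bound hf.aestronglyMeasurable C
    (Filter.Eventually.of_forall fun x => hC _ ⟨x, rfl⟩)

variable {ι : Type} [Fintype ι] [DecidableEq ι]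

lemma unitary_rightInvariant
    [MeasurableSpace (Matrix.unitaryGroup ι ℂ)] [BorelSpace (Matrix.unitaryGroup ι ℂ)]
    (μ : Measure (Matrix.unitaryGroup ι ℂ)) [μ.IsHaarMeasure] [IsProbabilityMeasure μ] :
    μ.IsMulRightInvariant := by
  constructor
  intro g
  have : IsProbabilityMeasure (Measure.map (fun x => x * g) μ) :=
    Measure.isProbabilityMeasure_map (by fun_prop)
  have : (Measure.map (fun x => x * g) μ).IsHaarMeasure := inferInstance
  exact Measure.isHaarMeasure_eq_of_isProbabilityMeasure _ _

attribute [local instance] unitary_rightInvariant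


lemma svd_exists (A : Matrix ι ι ℂ) : ∃ U V : Matrix.unitaryGroup ι ℂ, ∃ s : ι → ℂ,
    A = U.1 * Matrix.diagonal s * V.1 := by
  have hH : (Aᴴ * A).IsHermitian := Matrix.isHermitian_conjTranspose_mul_self A
  set V0 := hH.eigenvectorUnitary with hV0
  set B : Matrix ι ι ℂ := A * V0.1 with hB
  have hBB : Bᴴ * B = Matrix.diagonal (RCLike.ofReal ∘ hH.eigenvalues) := by
    have h := hH.conjStarAlgAut_star_eigenvectorUnitary
    rw [Unitary.conjStarAlgAut_apply] at h
    rw [← h, hB, Matrix.conjTranspose_mul]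
    simp [Matrix.mul_assoc, Matrix.star_eq_conjTranspose, hV0]
  let v : ι → EuclideanSpace ℂ ι := fun i => WithLp.toLp 2 (fun k => B k i)
  have hinner : ∀ i j, inner ℂ (v i) (v j) = (Bᴴ * B) i j := by
    intro i j
    simp [v, PiLp.inner_apply, Matrix.mul_apply, mul_comm]
  let u : ι → EuclideanSpace ℂ ι := fun i => ((‖v i‖ : ℂ)⁻¹) • v i
  have hu : Orthonormal ℂ (({i | v i ≠ 0} : Set ι).domRestrict u) := by
    constructor
    · rintro ⟨i, hi⟩
      have : ‖v i‖ ≠ 0 := norm_ne_zero_iff.mpr hi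
      simp [u, norm_smul, this]
    · rintro ⟨i, hi⟩ ⟨j, hj⟩ hij
      have hne : i ≠ j := fun h => hij (Subtype.ext h)
      simp [u, inner_smul_left, inner_smul_right, hinner, hBB, Matrix.diagonal_apply_ne _ hne]
  obtain ⟨b, hb⟩ := hu.exists_orthonormalBasis_extension_of_card_eq (by simp)
  let U : Matrix ι ι ℂ := Matrix.of fun k i => b i k
  have hU : U ∈ Matrix.unitaryGroup ι ℂ := by
    rw [Matrix.mem_unitaryGroup_iff']
    ext i j
    have := b.inner_eq_ite i j
    rw [PiLp.inner_apply] at this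
    rw [Matrix.mul_apply, Matrix.one_apply, ← this]
    simp [U, Matrix.star_apply, mul_comm]
  refine ⟨⟨U, hU⟩, star V0, fun i => (‖v i‖ : ℂ), ?_⟩
  have hBU : B = U * Matrix.diagonal (fun i => (‖v i‖ : ℂ)) := by
    ext k i
    rw [Matrix.mul_diagonal]
    by_cases h : v i = 0
    · have : v i k = 0 := by rw [h]; rfl
      simp only [h, norm_zero, Complex.ofReal_zero, mul_zero]
      exact this
    · have hn : (‖v i‖ : ℂ) ≠ 0 := by exact_mod_cast norm_ne_zero_iff.mpr h
      have : b i k = (‖v i‖ : ℂ)⁻¹ * B k i := by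
        rw [hb i h]
        rfl
      change _ = b i k * _
      rw [this]
      field_simp
  change A = U * _ * star V0.1
  rw [← hBU, hB, Matrix.mul_assoc]
  have := Matrix.mem_unitaryGroup_iff.mp V0.2
  rw [this, Matrix.mul_one]

lemma frob_eq (A : Matrix ι ι ℂ) : ((∑ i, ∑ j, ‖A i j‖ ^ 2 : ℝ) : ℂ) = (A * Aᴴ).trace := by
  simp only [Matrix.trace, Matrix.diag_apply, Matrix.mul_apply, Matrix.conjTranspose_apply]
  push_cast
  refine Finset.sum_congr rfl fun i _ => Finset.sum_congr rfl fun j _ => ?_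
  rw [← Complex.mul_conj']
  rfl

lemma frob_unitary (U V : Matrix.unitaryGroup ι ℂ) (M : Matrix ι ι ℂ) :
    ∑ i, ∑ j, ‖(U.1 * M * V.1) i j‖ ^ 2 = ∑ i, ∑ j, ‖M i j‖ ^ 2 := by
  have hU : (U.1)ᴴ * U.1 = 1 := Matrix.mem_unitaryGroup_iff'.mp U.2
  have hV : V.1 * (V.1)ᴴ = 1 := Matrix.mem_unitaryGroup_iff.mp V.2
  have h : ((∑ i, ∑ j, ‖(U.1 * M * V.1) i j‖ ^ 2 : ℝ) : ℂ) =
      ((∑ i, ∑ j, ‖M i j‖ ^ 2 : ℝ) : ℂ) := by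
    rw [frob_eq, frob_eq, Matrix.conjTranspose_mul, Matrix.conjTranspose_mul]
    calc (U.1 * M * V.1 * ((V.1)ᴴ * (Mᴴ * (U.1)ᴴ))).trace
        = (U.1 * (M * (V.1 * (V.1)ᴴ) * Mᴴ * (U.1)ᴴ)).trace := by simp only [Matrix.mul_assoc]
      _ = (M * Mᴴ).trace := by
          rw [hV, Matrix.mul_one, Matrix.trace_mul_comm, Matrix.mul_assoc, hU, Matrix.mul_one]
  exact_mod_cast h

@[fun_prop]
lemma continuous_entry {X : Type*} [TopologicalSpace X] {f : X → Matrix.unitaryGroup ι ℂ}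
    (hf : Continuous f) (i j : ι) : Continuous fun x => (f x).1 i j :=
  (continuous_subtype_val.comp hf).matrix_elem i j

/-- Unitary multiplying row `p` by `I`. -/
noncomputable def phaseU (p : ι) : Matrix.unitaryGroup ι ℂ :=
  ⟨Matrix.diagonal (fun i => if i = p then Complex.I else 1), by
    rw [Matrix.mem_unitaryGroup_iff, Matrix.star_eq_conjTranspose, Matrix.diagonal_conjTranspose,
      Matrix.diagonal_mul_diagonal, ← Matrix.diagonal_one]
    congr 1
    ext i
    by_cases h : i = p <;> simp [h]⟩

lemma phaseU_mul (p : ι) (W : Matrix.unitaryGroup ι ℂ) (i j : ι) :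
    (phaseU p * W).1 i j = (if i = p then Complex.I else 1) * W.1 i j := by
  change (Matrix.diagonal (fun i => if i = p then Complex.I else 1) * W.1) i j = _
  rw [Matrix.diagonal_mul]

/-- Unitary permuting basis vectors. -/
noncomputable def permU (σ : Equiv.Perm ι) : Matrix.unitaryGroup ι ℂ :=
  ⟨σ.permMatrix ℂ, by
    rw [Matrix.mem_unitaryGroup_iff, Matrix.star_eq_conjTranspose, Matrix.conjTranspose_permMatrix,
      ← Matrix.permMatrix_mul]
    simp⟩

lemma permU_mul (σ : Equiv.Perm ι) (W : Matrix.unitaryGroup ι ℂ) (i j : ι) :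
    (permU σ * W).1 i j = W.1 (σ i) j := by
  change (σ.permMatrix ℂ * W.1) i j = _
  rw [Equiv.Perm.permMatrix, PEquiv.toMatrix_toPEquiv_mul]
  rfl

lemma mul_permU (σ : Equiv.Perm ι) (W : Matrix.unitaryGroup ι ℂ) (i j : ι) :
    (W * permU σ).1 i j = W.1 i (σ.symm j) := by
  change (W.1 * σ.permMatrix ℂ) i j = _
  rw [Equiv.Perm.permMatrix, PEquiv.mul_toMatrix_toPEquiv]
  rfl

/-- The vector `e_a - 2 e_b`. -/
noncomputable def refVec (a b : ι) : ι → ℂ := Pi.single a 1 - (2 : ℂ) • Pi.single b 1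

lemma refVec_dot {a b : ι} (h : a ≠ b) : refVec a b ⬝ᵥ refVec a b = 5 := by
  simp [refVec, dotProduct_sub, h, h.symm]
  norm_num

/-- Householder reflection mixing rows `a`, `b`. -/
noncomputable def reflU (a b : ι) (h : a ≠ b) : Matrix.unitaryGroup ι ℂ :=
  ⟨1 - (2 / 5 : ℂ) • Matrix.vecMulVec (refVec a b) (refVec a b), by
    have hs : star (refVec a b) = refVec a b := by
      ext i
      simp only [refVec, Pi.star_apply, Pi.sub_apply, Pi.smul_apply, Pi.single_apply]
      split_ifs <;> simp
    have hs2 : star (2 / 5 : ℂ) = 2 / 5 := by simp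
    have h5 := refVec_dot h
    rw [Matrix.mem_unitaryGroup_iff, Matrix.star_eq_conjTranspose, Matrix.conjTranspose_sub,
      Matrix.conjTranspose_smul, Matrix.conjTranspose_vecMulVec, hs, hs2, Matrix.conjTranspose_one,
      sub_mul, mul_sub, mul_sub, Matrix.smul_mul, Matrix.mul_smul, Matrix.smul_mul,
      Matrix.mul_smul, Matrix.vecMulVec_mul_vecMulVec, h5]
    ext i j
    simp [Matrix.vecMulVec_apply]
    ring⟩

lemma reflU_mul {a b : ι} (h : a ≠ b) (W : Matrix.unitaryGroup ι ℂ) (j : ι) :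
    (reflU a b h * W).1 a j = 3 / 5 * W.1 a j + 4 / 5 * W.1 b j := by
  change ((1 - (2 / 5 : ℂ) • Matrix.vecMulVec (refVec a b) (refVec a b)) * W.1) a j = _
  rw [sub_mul, one_mul, Matrix.smul_mul, Matrix.vecMulVec_mul]
  have h1 : refVec a b a = 1 := by simp [refVec, h]
  have h2 : (refVec a b ᵥ* W.1) j = W.1 a j - 2 * W.1 b j := by
    simp [refVec, Matrix.sub_vecMul, Matrix.smul_vecMul]
  simp [Matrix.vecMulVec_apply, h1, h2]
  ring

lemma phase_avg (x y : ℂ) :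
    ‖x + y‖ ^ 4 + ‖x + Complex.I * y‖ ^ 4 + ‖x + Complex.I * (Complex.I * y)‖ ^ 4
      + ‖x + Complex.I * (Complex.I * (Complex.I * y))‖ ^ 4
      = 4 * (‖x‖ ^ 4 + ‖y‖ ^ 4 + 4 * (‖x‖ ^ 2 * ‖y‖ ^ 2)) := by
  have h : ∀ z : ℂ, ‖z‖ ^ 4 = (z.re ^ 2 + z.im ^ 2) ^ 2 := by
    intro z
    rw [show ‖z‖ ^ 4 = (‖z‖ ^ 2) ^ 2 by ring, Complex.sq_norm, Complex.normSq_apply]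
    ring
  simp only [h, Complex.sq_norm, Complex.normSq_apply]
  simp
  ring

lemma phase_avg_two (x y : ℂ) :
    ‖x + y‖ ^ 2 + ‖x + Complex.I * (Complex.I * y)‖ ^ 2 = 2 * (‖x‖ ^ 2 + ‖y‖ ^ 2) := by
  simp only [Complex.sq_norm, Complex.normSq_apply]
  simp
  ring

variable [MeasurableSpace (Matrix.unitaryGroup ι ℂ)] [BorelSpace (Matrix.unitaryGroup ι ℂ)]
    (μ : Measure (Matrix.unitaryGroup ι ℂ)) [μ.IsHaarMeasure] [IsProbabilityMeasure μ]

/-- Fourth moment identity for two functions, where the second picks up a phase `I`. -/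
lemma phase_integral (p : ι) (x y : Matrix.unitaryGroup ι ℂ → ℂ) (hx : Continuous x)
    (hy : Continuous y) (hxp : ∀ W, x (phaseU p * W) = x W)
    (hyp : ∀ W, y (phaseU p * W) = Complex.I * y W) :
    ∫ W, ‖x W + y W‖ ^ 4 ∂μ
      = ∫ W, ‖x W‖ ^ 4 ∂μ + ∫ W, ‖y W‖ ^ 4 ∂μ + 4 * ∫ W, ‖x W‖ ^ 2 * ‖y W‖ ^ 2 ∂μ := by
  have e1 : ∫ W, ‖x W + Complex.I * y W‖ ^ 4 ∂μ = ∫ W, ‖x W + y W‖ ^ 4 ∂μ := by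
    rw [← integral_mul_left_eq_self (fun W => ‖x W + y W‖ ^ 4) (phaseU p)]
    simp only [hxp, hyp]
  have e2 : ∫ W, ‖x W + Complex.I * (Complex.I * y W)‖ ^ 4 ∂μ = ∫ W, ‖x W + y W‖ ^ 4 ∂μ := by
    rw [← e1, ← integral_mul_left_eq_self (fun W => ‖x W + Complex.I * y W‖ ^ 4) (phaseU p)]
    simp only [hxp, hyp]
  have e3 : ∫ W, ‖x W + Complex.I * (Complex.I * (Complex.I * y W))‖ ^ 4 ∂μ
      = ∫ W, ‖x W + y W‖ ^ 4 ∂μ := by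
    rw [← e2, ← integral_mul_left_eq_self
      (fun W => ‖x W + Complex.I * (Complex.I * y W)‖ ^ 4) (phaseU p)]
    simp only [hxp, hyp]
  have key : ∫ W, (‖x W + y W‖ ^ 4 + ‖x W + Complex.I * y W‖ ^ 4
      + ‖x W + Complex.I * (Complex.I * y W)‖ ^ 4
      + ‖x W + Complex.I * (Complex.I * (Complex.I * y W))‖ ^ 4) ∂μ
      = ∫ W, 4 * (‖x W‖ ^ 4 + ‖y W‖ ^ 4 + 4 * (‖x W‖ ^ 2 * ‖y W‖ ^ 2)) ∂μ := by
    simp only [phase_avg]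
  rw [integral_add (continuous_integrable μ (by fun_prop)) (continuous_integrable μ (by fun_prop)),
    integral_add (continuous_integrable μ (by fun_prop)) (continuous_integrable μ (by fun_prop)),
    integral_add (continuous_integrable μ (by fun_prop)) (continuous_integrable μ (by fun_prop)),
    e1, e2, e3, integral_const_mul,
    integral_add (continuous_integrable μ (by fun_prop)) (continuous_integrable μ (by fun_prop)),
    integral_add (continuous_integrable μ (by fun_prop)) (continuous_integrable μ (by fun_prop)),
    integral_const_mul] at key
  linarith

lemma phase_integral_two (p : ι) (x y : Matrix.unitaryGroup ι ℂ → ℂ)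
    (g : Matrix.unitaryGroup ι ℂ → ℝ) (hx : Continuous x)
    (hy : Continuous y) (hg : Continuous g) (hxp : ∀ W, x (phaseU p * W) = x W)
    (hyp : ∀ W, y (phaseU p * W) = Complex.I * y W) (hgp : ∀ W, g (phaseU p * W) = g W) :
    ∫ W, ‖x W + y W‖ ^ 2 * g W ∂μ
      = ∫ W, ‖x W‖ ^ 2 * g W ∂μ + ∫ W, ‖y W‖ ^ 2 * g W ∂μ := by
  have e1 : ∫ W, ‖x W + Complex.I * (Complex.I * y W)‖ ^ 2 * g W ∂μ
      = ∫ W, ‖x W + y W‖ ^ 2 * g W ∂μ := by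
    rw [← integral_mul_left_eq_self (fun W => ‖x W + y W‖ ^ 2 * g W) (phaseU p * phaseU p)]
    simp only [hxp, hyp, hgp, mul_assoc]
  have key : ∫ W, (‖x W + y W‖ ^ 2 * g W
      + ‖x W + Complex.I * (Complex.I * y W)‖ ^ 2 * g W) ∂μ
      = ∫ W, 2 * (‖x W‖ ^ 2 * g W + ‖y W‖ ^ 2 * g W) ∂μ := by
    simp only [← add_mul, phase_avg_two, mul_assoc]
  rw [integral_add (continuous_integrable μ (by fun_prop)) (continuous_integrable μ (by fun_prop)),
    e1, integral_const_mul,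
    integral_add (continuous_integrable μ (by fun_prop)) (continuous_integrable μ (by fun_prop))]
    at key
  linarith

/-- Second-order absolute moments of matrix entries. -/
noncomputable def mom (i j k l : ι) : ℝ := ∫ W, ‖W.1 i j‖ ^ 2 * ‖W.1 k l‖ ^ 2 ∂μ

lemma mom_perm_left (σ : Equiv.Perm ι) (i j k l : ι) :
    mom μ (σ i) j (σ k) l = mom μ i j k l := by
  unfold mom
  rw [← integral_mul_left_eq_self (fun W => ‖W.1 i j‖ ^ 2 * ‖W.1 k l‖ ^ 2) (permU σ)]
  simp only [permU_mul]

lemma mom_perm_right (σ : Equiv.Perm ι) (i j k l : ι) :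
    mom μ i (σ j) k (σ l) = mom μ i j k l := by
  unfold mom
  rw [← integral_mul_right_eq_self (fun W => ‖W.1 i j‖ ^ 2 * ‖W.1 k l‖ ^ 2) (permU σ.symm)]
  simp only [mul_permU, Equiv.symm_symm]

lemma col_norm (W : Matrix.unitaryGroup ι ℂ) (j : ι) : ∑ i, ‖W.1 i j‖ ^ 2 = 1 := by
  have h := congrFun (congrFun (Matrix.mem_unitaryGroup_iff'.mp W.2) j) j
  rw [Matrix.mul_apply] at h
  have h2 : ((∑ i, ‖W.1 i j‖ ^ 2 : ℝ) : ℂ) = 1 := by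
    push_cast
    rw [Matrix.one_apply_eq] at h
    rw [← h]
    refine Finset.sum_congr rfl fun i _ => ?_
    rw [Matrix.star_apply, ← Complex.conj_mul']
    rfl
  exact_mod_cast h2

lemma row_norm (W : Matrix.unitaryGroup ι ℂ) (i : ι) : ∑ j, ‖W.1 i j‖ ^ 2 = 1 := by
  have h := congrFun (congrFun (Matrix.mem_unitaryGroup_iff.mp W.2) i) i
  rw [Matrix.mul_apply] at h
  have h2 : ((∑ j, ‖W.1 i j‖ ^ 2 : ℝ) : ℂ) = 1 := by
    push_cast
    rw [Matrix.one_apply_eq] at h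
    rw [← h]
    refine Finset.sum_congr rfl fun j _ => ?_
    rw [Matrix.star_apply, ← Complex.mul_conj']
    rfl
  exact_mod_cast h2

lemma first_moment (i j : ι) : ∫ W, ‖W.1 i j‖ ^ 2 ∂μ = 1 / (Fintype.card ι : ℝ) := by
  have h1 : ∀ k, ∫ W, ‖W.1 k j‖ ^ 2 ∂μ = ∫ W, ‖W.1 i j‖ ^ 2 ∂μ := by
    intro k
    rw [← integral_mul_left_eq_self (fun W => ‖W.1 i j‖ ^ 2) (permU (Equiv.swap i k))]
    simp only [permU_mul, Equiv.swap_apply_left]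
  have h2 : ∑ k, ∫ W, ‖W.1 k j‖ ^ 2 ∂μ = 1 := by
    rw [← integral_finsetSum _ (fun k _ => continuous_integrable μ (by fun_prop))]
    simp only [col_norm]
    simp
  simp only [h1] at h2
  simp only [Finset.sum_const, Finset.card_univ, nsmul_eq_mul] at h2
  exact eq_one_div_of_mul_eq_one_right h2

lemma mom_sum_col (i j l : ι) : ∑ k, mom μ i j k l = 1 / (Fintype.card ι : ℝ) := by
  unfold mom
  rw [← integral_finsetSum _ (fun k _ => continuous_integrable μ (by fun_prop)),
    ← first_moment μ i j]
  simp only [← Finset.mul_sum, col_norm, mul_one]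

lemma mom_sum_row (i j k : ι) : ∑ l, mom μ i j k l = 1 / (Fintype.card ι : ℝ) := by
  unfold mom
  rw [← integral_finsetSum _ (fun k _ => continuous_integrable μ (by fun_prop)),
    ← first_moment μ i j]
  simp only [← Finset.mul_sum, row_norm, mul_one]

lemma mom_half (i j k : ι) (h : i ≠ k) : mom μ i j k j = mom μ i j i j / 2 := by
  have hself : ∀ i, mom μ i j i j = ∫ W, ‖W.1 i j‖ ^ 4 ∂μ := by
    intro i
    unfold mom
    congr 1
    ext W
    ring
  have h1 : mom μ k j k j = mom μ i j i j := by
    have := mom_perm_left μ (Equiv.swap i k) i j i j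
    rwa [Equiv.swap_apply_left] at this
  have h2 : ∫ W, ‖W.1 i j‖ ^ 4 ∂μ = ∫ W, ‖3 / 5 * W.1 i j + 4 / 5 * W.1 k j‖ ^ 4 ∂μ := by
    rw [← integral_mul_left_eq_self (fun W => ‖W.1 i j‖ ^ 4) (reflU i k h)]
    simp only [reflU_mul]
  rw [phase_integral μ k (fun W => 3 / 5 * W.1 i j) (fun W => 4 / 5 * W.1 k j)
    (by fun_prop) (by fun_prop) (fun W => by simp [phaseU_mul, h])
    (fun W => by simp [phaseU_mul]; ring)] at h2
  simp only [norm_mul, mul_pow] at h2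
  have h3 : ∀ W : Matrix.unitaryGroup ι ℂ, ‖(3 / 5 : ℂ)‖ ^ 2 * ‖W.1 i j‖ ^ 2 *
      (‖(4 / 5 : ℂ)‖ ^ 2 * ‖W.1 k j‖ ^ 2) = 144 / 625 * (‖W.1 i j‖ ^ 2 * ‖W.1 k j‖ ^ 2) := by
    intro W
    norm_num
    ring
  simp only [h3] at h2
  rw [integral_const_mul, integral_const_mul, integral_const_mul, ← hself, ← hself, h1] at h2
  change _ = _ + 4 * (144 / 625 * mom μ i j k j) at h2
  norm_num at h2
  linarith

lemma mom_self (i j : ι) : mom μ i j i j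
    = 2 / ((Fintype.card ι : ℝ) * (Fintype.card ι + 1)) := by
  have h := mom_sum_col μ i j j
  rw [← Finset.add_sum_erase _ _ (Finset.mem_univ i),
    Finset.sum_congr rfl (fun k hk => mom_half μ i j k (Finset.ne_of_mem_erase hk).symm)] at h
  have hc : 1 ≤ Fintype.card ι := Fintype.card_pos_iff.mpr ⟨i⟩
  simp only [Finset.sum_const, Finset.card_erase_of_mem (Finset.mem_univ i), Finset.card_univ,
    nsmul_eq_mul, Nat.cast_sub hc] at h
  have hc' : (1 : ℝ) ≤ Fintype.card ι := by exact_mod_cast hc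
  push_cast at h
  field_simp at h ⊢
  linarith

lemma mom_row (i j l : ι) (h : j ≠ l) : mom μ i j i l
    = 1 / ((Fintype.card ι : ℝ) * (Fintype.card ι + 1)) := by
  have hs := mom_sum_row μ i j i
  have heq : ∀ l' ∈ Finset.univ.erase j, mom μ i j i l' = mom μ i j i l := by
    intro l' hl'
    have hl := Finset.ne_of_mem_erase hl'
    have := mom_perm_right μ (Equiv.swap l l') i j i l
    rwa [Equiv.swap_apply_left, Equiv.swap_apply_of_ne_of_ne h hl.symm] at this
  rw [← Finset.add_sum_erase _ _ (Finset.mem_univ j), Finset.sum_congr rfl heq, mom_self] at hs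
  have hc : 2 ≤ Fintype.card ι := Fintype.one_lt_card_iff.mpr ⟨j, l, h⟩
  simp only [Finset.sum_const, Finset.card_erase_of_mem (Finset.mem_univ j), Finset.card_univ,
    nsmul_eq_mul, Nat.cast_sub (show 1 ≤ Fintype.card ι by lia)] at hs
  have hc' : (2 : ℝ) ≤ Fintype.card ι := by exact_mod_cast hc
  push_cast at hs
  generalize (Fintype.card ι : ℝ) = d at *
  have hd : d - 1 ≠ 0 := by linarith
  field_simp at hs ⊢
  apply mul_left_cancel₀ hd
  linarith

lemma mom_diag (i k : ι) (h : i ≠ k) : mom μ i i k k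
    = 1 / ((Fintype.card ι : ℝ) ^ 2 - 1) := by
  have hs := mom_sum_col μ i i k
  have heq : ∀ k' ∈ Finset.univ.erase i, mom μ i i k' k = mom μ i i k k := by
    intro k' hl'
    have hl := Finset.ne_of_mem_erase hl'
    have := mom_perm_left μ (Equiv.swap k k') i i k k
    rwa [Equiv.swap_apply_left, Equiv.swap_apply_of_ne_of_ne h hl.symm] at this
  rw [← Finset.add_sum_erase _ _ (Finset.mem_univ i), Finset.sum_congr rfl heq,
    mom_row μ i i k h] at hs
  have hc : 2 ≤ Fintype.card ι := Fintype.one_lt_card_iff.mpr ⟨i, k, h⟩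
  simp only [Finset.sum_const, Finset.card_erase_of_mem (Finset.mem_univ i), Finset.card_univ,
    nsmul_eq_mul, Nat.cast_sub (show 1 ≤ Fintype.card ι by lia)] at hs
  have hc' : (2 : ℝ) ≤ Fintype.card ι := by exact_mod_cast hc
  push_cast at hs
  generalize (Fintype.card ι : ℝ) = d at *
  have hd : d - 1 ≠ 0 := by linarith
  have hd2 : d ^ 2 - 1 = (d - 1) * (d + 1) := by ring
  rw [hd2]
  have hd0 : d ≠ 0 := by linarith
  field_simp at hs ⊢
  apply mul_left_cancel₀ hd0
  linarith

lemma diag_two (s : ι → ℂ) (S : Finset ι) (p : ι) (hp : p ∉ S) :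
    ∫ W, ‖∑ i ∈ S, s i * W.1 i i‖ ^ 2 * ‖s p * W.1 p p‖ ^ 2 ∂μ
      = ∑ i ∈ S, ‖s i‖ ^ 2 * ‖s p‖ ^ 2 * mom μ i i p p := by
  induction S using Finset.induction_on with
  | empty => simp
  | insert q S hq ih =>
    have hpS : p ∉ S := fun h => hp (Finset.mem_insert_of_mem h)
    have hqp : q ≠ p := fun h => hp (h ▸ Finset.mem_insert_self _ _)
    simp only [Finset.sum_insert hq]
    have hz : ∀ W : Matrix.unitaryGroup ι ℂ, s q * W.1 q q + ∑ i ∈ S, s i * W.1 i i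
      = ∑ i ∈ S, s i * W.1 i i + s q * W.1 q q := fun W => add_comm _ _
    simp only [hz]
    rw [phase_integral_two μ q (fun W => ∑ i ∈ S, s i * W.1 i i) (fun W => s q * W.1 q q)
      (fun W => ‖s p * W.1 p p‖ ^ 2) (by fun_prop) (by fun_prop) (by fun_prop) _ _ _, ih hpS,
      add_comm]
    · congr 1
      unfold mom
      rw [← integral_const_mul]
      congr 1
      ext W
      simp only [norm_mul]
      ring
    · intro W
      refine Finset.sum_congr rfl fun i hi => ?_
      have hne : i ≠ q := fun h => hq (h ▸ hi)
      rw [phaseU_mul, if_neg hne, one_mul]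
    · intro W
      simp only [phaseU_mul, if_true]
      ring
    · intro W
      simp only [phaseU_mul, if_neg hqp.symm, one_mul]

lemma diag_four (hι : 2 ≤ Fintype.card ι) (s : ι → ℂ) (S : Finset ι) :
    ∫ W, ‖∑ i ∈ S, s i * W.1 i i‖ ^ 4 ∂μ
      ≤ 2 / ((Fintype.card ι : ℝ) ^ 2 - 1) * (∑ i ∈ S, ‖s i‖ ^ 2) ^ 2 := by
  have hc' : (2 : ℝ) ≤ Fintype.card ι := by exact_mod_cast hι
  induction S using Finset.induction_on with
  | empty => simp
  | insert q S hq ih =>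
    simp only [Finset.sum_insert hq]
    have hz : ∀ W : Matrix.unitaryGroup ι ℂ, s q * W.1 q q + ∑ i ∈ S, s i * W.1 i i
      = ∑ i ∈ S, s i * W.1 i i + s q * W.1 q q := fun W => add_comm _ _
    simp only [hz]
    rw [phase_integral μ q (fun W => ∑ i ∈ S, s i * W.1 i i) (fun W => s q * W.1 q q)
      (by fun_prop) (by fun_prop) _ _, diag_two μ s S q hq]
    · have h1 : ∑ i ∈ S, ‖s i‖ ^ 2 * ‖s q‖ ^ 2 * mom μ i i q q
          = (∑ i ∈ S, ‖s i‖ ^ 2) * (‖s q‖ ^ 2 * (1 / ((Fintype.card ι : ℝ) ^ 2 - 1))) := by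
        rw [Finset.sum_mul]
        refine Finset.sum_congr rfl fun i hi => ?_
        rw [mom_diag μ i q (fun h => hq (h ▸ hi))]
        ring
      have h2 : ∫ W, ‖s q * W.1 q q‖ ^ 4 ∂μ = ‖s q‖ ^ 4 * mom μ q q q q := by
        unfold mom
        rw [← integral_const_mul]
        congr 1
        ext W
        simp only [norm_mul]
        ring
      have h3 : mom μ q q q q ≤ 2 / ((Fintype.card ι : ℝ) ^ 2 - 1) := by
        rw [mom_self]
        apply div_le_div_of_nonneg_left (by norm_num) (by nlinarith) (by nlinarith)
      have h4 : ‖s q‖ ^ 4 * mom μ q q q q ≤ ‖s q‖ ^ 4 * (2 / ((Fintype.card ι : ℝ) ^ 2 - 1)) :=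
        mul_le_mul_of_nonneg_left h3 (by positivity)
      rw [h1, h2]
      have h5 : 1 / ((Fintype.card ι : ℝ) ^ 2 - 1) = (2 / ((Fintype.card ι : ℝ) ^ 2 - 1)) / 2 := by
        ring
      rw [h5]
      nlinarith
    · intro W
      refine Finset.sum_congr rfl fun i hi => ?_
      have hne : i ≠ q := fun h => hq (h ▸ hi)
      rw [phaseU_mul, if_neg hne, one_mul]
    · intro W
      simp only [phaseU_mul, if_true]
      ring

/-- The fourth-moment bound for a Haar-random unitary. -/
lemma haar_fourth (hι : 2 ≤ Fintype.card ι) (A : Matrix ι ι ℂ) :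
    ∫ W, ‖∑ i, ∑ j, W.1 i j * A i j‖ ^ 4 ∂μ
      ≤ 2 / ((Fintype.card ι : ℝ) ^ 2 - 1) * (∑ i, ∑ j, ‖A i j‖ ^ 2) ^ 2 := by
  obtain ⟨U, V, s, hA⟩ := svd_exists Aᵀ
  have h1 : ∀ W : Matrix.unitaryGroup ι ℂ, ∑ i, ∑ j, W.1 i j * A i j
      = ∑ i, s i * (V * W * U).1 i i := by
    intro W
    have : ∑ i, ∑ j, W.1 i j * A i j = (W.1 * Aᵀ).trace := by
      simp [Matrix.trace, Matrix.mul_apply]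
    rw [this, hA]
    calc (W.1 * (U.1 * Matrix.diagonal s * V.1)).trace
        = ((W.1 * U.1 * Matrix.diagonal s) * V.1).trace := by simp only [Matrix.mul_assoc]
      _ = ((V.1 * W.1 * U.1) * Matrix.diagonal s).trace := by
          rw [Matrix.trace_mul_comm]; simp only [Matrix.mul_assoc]
      _ = _ := by
          simp only [Matrix.trace, Matrix.diag_apply, Matrix.mul_diagonal]
          exact Finset.sum_congr rfl fun i _ => mul_comm _ _
  simp only [h1]
  have e1 := integral_mul_right_eq_self (μ := μ) (fun W => ‖∑ i, s i * (V * W).1 i i‖ ^ 4) U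
  have e2 := integral_mul_left_eq_self (μ := μ) (fun W => ‖∑ i, s i * W.1 i i‖ ^ 4) V
  simp only [← mul_assoc] at e1
  have h2 : ∑ i, ∑ j, ‖A i j‖ ^ 2 = ∑ i, ‖s i‖ ^ 2 := by
    rw [Finset.sum_comm]
    change ∑ i, ∑ j, ‖Aᵀ i j‖ ^ 2 = _
    rw [hA, frob_unitary]
    refine Finset.sum_congr rfl fun i _ => ?_
    rw [Finset.sum_eq_single i]
    · simp
    · intro j _ hj
      simp [Matrix.diagonal_apply_ne' _ hj]
    · simp
  rw [h2]
  exact (e1.trans e2).le.trans (diag_four μ hι s Finset.univ)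

end HaarFacts

section CircuitFacts

attribute [local instance] unitary_compactSpace unitary_secondCountable unitary_rightInvariant


lemma extend_comp_inj {n m : ℕ} {pos : Fin m → Fin n} (hp : Function.Injective pos)
    (z : Fin m → Bool) (x : Fin n → Bool) : Function.extend pos z x ∘ pos = z := by
  ext t
  simp [hp.extend_apply]

lemma embed_mulVec {n m : ℕ} (pos : Fin m → Fin n) (hp : Function.Injective pos)
    (A : Matrix (Fin m → Bool) (Fin m → Bool) ℂ) (v : (Fin n → Bool) → ℂ) (x : Fin n → Bool) :
    (embedBlock pos A *ᵥ v) x = ∑ z, A (x ∘ pos) z * v (Function.extend pos z x) := by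
  have hcomp : ∀ z : Fin m → Bool, Function.extend pos z x ∘ pos = z := fun z =>
    extend_comp_inj hp z x
  symm
  apply Fintype.sum_of_injective (fun z => Function.extend pos z x)
  · intro z z' h
    rw [← hcomp z, ← hcomp z']
    exact congrArg (· ∘ pos) h
  · intro y hy
    simp only [embedBlock]
    rw [if_neg, zero_mul]
    intro h
    apply hy
    refine ⟨y ∘ pos, ?_⟩
    ext q
    by_cases hq : ∃ t, pos t = q
    · obtain ⟨t, rfl⟩ := hq
      simp [hp.extend_apply]
    · simp only [Function.extend_apply' _ _ _ hq]
      exact h q (by simpa using hq)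
  · intro z
    simp only [embedBlock]
    rw [if_pos, hcomp]
    intro q hq
    rw [Function.extend_apply' _ _ _ (by simpa using hq)]

lemma matrix_ext_mulVec {α : Type} [Fintype α] [DecidableEq α] {A B : Matrix α α ℂ}
    (h : ∀ v x, (A *ᵥ v) x = (B *ᵥ v) x) : A = B := by
  ext i j
  have := h (Pi.single j 1) i
  simpa using this

lemma embed_mul {n m : ℕ} (pos : Fin m → Fin n) (hp : Function.Injective pos)
    (A B : Matrix (Fin m → Bool) (Fin m → Bool) ℂ) :
    embedBlock pos A * embedBlock pos B = embedBlock pos (A * B) := by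
  apply matrix_ext_mulVec
  intro v x
  have hee : ∀ z z' : Fin m → Bool,
      Function.extend pos z' (Function.extend pos z x) = Function.extend pos z' x := by
    intro z z'
    ext q
    by_cases hq : ∃ t, pos t = q
    · obtain ⟨t, rfl⟩ := hq
      simp [hp.extend_apply]
    · simp only [Function.extend_apply' _ _ _ hq]
  rw [← Matrix.mulVec_mulVec]
  simp only [embed_mulVec pos hp, extend_comp_inj hp, hee, Matrix.mul_apply, Finset.mul_sum,
    Finset.sum_mul]
  rw [Finset.sum_comm]
  simp only [mul_assoc]

lemma embed_comm {n m : ℕ} (p1 p2 : Fin m → Fin n) (h1 : Function.Injective p1)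
    (h2 : Function.Injective p2) (hd : ∀ t t', p1 t ≠ p2 t')
    (A B : Matrix (Fin m → Bool) (Fin m → Bool) ℂ) :
    embedBlock p1 A * embedBlock p2 B = embedBlock p2 B * embedBlock p1 A := by
  apply matrix_ext_mulVec
  intro v x
  have hc1 : ∀ z, Function.extend p1 z x ∘ p2 = x ∘ p2 := by
    intro z
    ext t
    simp only [Function.comp_apply]
    rw [Function.extend_apply' _ _ _ (fun ⟨a, ha⟩ => hd a t ha)]
  have hc2 : ∀ z, Function.extend p2 z x ∘ p1 = x ∘ p1 := by
    intro z
    ext t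
    simp only [Function.comp_apply]
    rw [Function.extend_apply' _ _ _ (fun ⟨a, ha⟩ => hd t a ha.symm)]
  have hee : ∀ z z' : Fin m → Bool,
      Function.extend p2 z' (Function.extend p1 z x)
        = Function.extend p1 z (Function.extend p2 z' x) := by
    intro z z'
    ext q
    by_cases hq1 : ∃ t, p1 t = q
    · obtain ⟨t, rfl⟩ := hq1
      rw [h1.extend_apply, Function.extend_apply' _ _ _ (fun ⟨a, ha⟩ => hd t a ha.symm),
        h1.extend_apply]
    · rw [Function.extend_apply' _ _ _ hq1]
      by_cases hq2 : ∃ t, p2 t = q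
      · obtain ⟨t, rfl⟩ := hq2
        simp [h2.extend_apply]
      · rw [Function.extend_apply' _ _ _ hq2, Function.extend_apply' _ _ _ hq1,
          Function.extend_apply' _ _ _ hq2]
  rw [← Matrix.mulVec_mulVec, ← Matrix.mulVec_mulVec]
  simp only [embed_mulVec p1 h1, embed_mulVec p2 h2, hc1, hc2, hee, Finset.mul_sum]
  rw [Finset.sum_comm]
  refine Finset.sum_congr rfl fun i _ => Finset.sum_congr rfl fun j _ => ?_
  ring

lemma embed_one {n m : ℕ} (pos : Fin m → Fin n) :
    embedBlock pos (1 : Matrix (Fin m → Bool) (Fin m → Bool) ℂ) = 1 := by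
  ext x y
  unfold embedBlock
  by_cases hxy : x = y
  · subst hxy
    simp
  · rw [Matrix.one_apply_ne hxy]
    split_ifs with h
    · apply Matrix.one_apply_ne
      intro h2
      apply hxy
      ext q
      by_cases hq : q ∈ Set.range pos
      · obtain ⟨t, rfl⟩ := hq
        exact congrFun h2 t
      · exact h q hq
    · rfl

lemma embed_conjTranspose {n m : ℕ} (pos : Fin m → Fin n)
    (A : Matrix (Fin m → Bool) (Fin m → Bool) ℂ) :
    (embedBlock pos A)ᴴ = embedBlock pos Aᴴ := by
  ext x y
  rw [Matrix.conjTranspose_apply]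
  unfold embedBlock
  simp only [eq_comm (a := y _)]
  split_ifs
  · rfl
  · simp

lemma embed_sum {n m : ℕ} (pos : Fin m → Fin n)
    (A : Matrix (Fin m → Bool) (Fin m → Bool) ℂ) :
    embedBlock pos A = ∑ i, ∑ j, A i j • embedBlock pos (Matrix.single i j 1) := by
  ext x y
  simp only [Matrix.sum_apply, Matrix.smul_apply]
  unfold embedBlock
  split_ifs
  · simp [Matrix.single_apply, ite_and]
  · simp

lemma embed_unitary {n m : ℕ} (pos : Fin m → Fin n) (hp : Function.Injective pos)
    (U : Matrix.unitaryGroup (Fin m → Bool) ℂ) :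
    embedBlock pos U.1 ∈ Matrix.unitaryGroup (Fin n → Bool) ℂ := by
  rw [Matrix.mem_unitaryGroup_iff, Matrix.star_eq_conjTranspose, embed_conjTranspose,
    embed_mul pos hp, ← Matrix.star_eq_conjTranspose, Matrix.mem_unitaryGroup_iff.mp U.2, embed_one]

lemma embed_continuous {n m : ℕ} (pos : Fin m → Fin n) {X : Type*} [TopologicalSpace X]
    {f : X → Matrix.unitaryGroup (Fin m → Bool) ℂ} (hf : Continuous f) :
    Continuous fun x => embedBlock pos (f x).1 := by
  refine continuous_matrix fun i j => ?_
  unfold embedBlock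
  split_ifs
  · fun_prop
  · fun_prop

/-- Squared Euclidean norm. -/
noncomputable def nsq {α : Type} [Fintype α] (v : α → ℂ) : ℝ := ∑ i, ‖v i‖ ^ 2

lemma nsq_nonneg {α : Type} [Fintype α] (v : α → ℂ) : 0 ≤ nsq v :=
  Finset.sum_nonneg fun _ _ => by positivity

lemma nsq_cs {α : Type} [Fintype α] (b a : α → ℂ) : ‖b ⬝ᵥ a‖ ^ 2 ≤ nsq b * nsq a := by
  have h1 : ‖b ⬝ᵥ a‖ ≤ ∑ i, ‖b i‖ * ‖a i‖ := by
    refine (norm_sum_le _ _).trans (le_of_eq ?_)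
    simp
  calc ‖b ⬝ᵥ a‖ ^ 2 ≤ (∑ i, ‖b i‖ * ‖a i‖) ^ 2 := by gcongr
    _ ≤ _ := Finset.sum_mul_sq_le_sq_mul_sq _ _ _

lemma nsq_star_dot {α : Type} [Fintype α] (v : α → ℂ) : (nsq v : ℂ) = v ⬝ᵥ star v := by
  unfold nsq dotProduct
  push_cast
  refine Finset.sum_congr rfl fun i _ => ?_
  rw [← Complex.mul_conj']
  rfl

lemma nsq_mulVec {α : Type} [Fintype α] (M : Matrix α α ℂ) (v : α → ℂ) :
    (nsq (M *ᵥ v) : ℂ) = star v ⬝ᵥ ((Mᴴ * M) *ᵥ v) := by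
  rw [nsq_star_dot, Matrix.star_mulVec, dotProduct_comm, ← Matrix.dotProduct_mulVec,
    Matrix.mulVec_mulVec]

lemma nsq_vecMul {α : Type} [Fintype α] (M : Matrix α α ℂ) (v : α → ℂ) :
    (nsq (v ᵥ* M) : ℂ) = v ⬝ᵥ ((M * Mᴴ) *ᵥ star v) := by
  rw [nsq_star_dot, Matrix.star_vecMul, ← Matrix.dotProduct_mulVec, Matrix.mulVec_mulVec]

lemma nsq_unitary {α : Type} [Fintype α] [DecidableEq α] {M : Matrix α α ℂ}
    (hM : M ∈ Matrix.unitaryGroup α ℂ) (v : α → ℂ) : nsq (M *ᵥ v) = nsq v := by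
  have h : (nsq (M *ᵥ v) : ℂ) = nsq v := by
    rw [nsq_mulVec, nsq_star_dot, ← Matrix.star_eq_conjTranspose,
      Matrix.mem_unitaryGroup_iff'.mp hM, Matrix.one_mulVec, dotProduct_comm]
  exact_mod_cast h

lemma sum_embed_diag {n m : ℕ} (pos : Fin m → Fin n) :
    ∑ i, embedBlock pos (Matrix.single i i (1 : ℂ)) = 1 := by
  rw [← embed_one pos, embed_sum pos 1]
  refine Finset.sum_congr rfl fun i _ => ?_
  simp [Matrix.one_apply]

lemma sum_nsq_right {n m : ℕ} (pos : Fin m → Fin n) (hp : Function.Injective pos)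
    (a : (Fin n → Bool) → ℂ) :
    ∑ j, nsq (embedBlock pos (Matrix.single j j (1 : ℂ)) *ᵥ a) = nsq a := by
  have h : ((∑ j, nsq (embedBlock pos (Matrix.single j j (1 : ℂ)) *ᵥ a) : ℝ) : ℂ) = nsq a := by
    push_cast
    simp only [nsq_mulVec, embed_conjTranspose, embed_mul pos hp, Matrix.conjTranspose_single,
      star_one, Matrix.single_mul_single_same, mul_one]
    rw [← dotProduct_sum, ← Matrix.sum_mulVec, sum_embed_diag, Matrix.one_mulVec, nsq_star_dot,
      dotProduct_comm]
  exact_mod_cast h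

lemma sum_nsq_left {n m : ℕ} (pos : Fin m → Fin n) (hp : Function.Injective pos)
    (b : (Fin n → Bool) → ℂ) (j : Fin m → Bool) :
    ∑ i, nsq (b ᵥ* embedBlock pos (Matrix.single i j (1 : ℂ))) = nsq b := by
  have h : ((∑ i, nsq (b ᵥ* embedBlock pos (Matrix.single i j (1 : ℂ))) : ℝ) : ℂ) = nsq b := by
    push_cast
    simp only [nsq_vecMul, embed_conjTranspose, embed_mul pos hp, Matrix.conjTranspose_single,
      star_one, Matrix.single_mul_single_same, mul_one]
    rw [← dotProduct_sum, ← Matrix.sum_mulVec, sum_embed_diag, Matrix.one_mulVec, nsq_star_dot]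
  exact_mod_cast h

/-- Minkowski-type inequality. -/
lemma mink {Ω I : Type*} [MeasurableSpace Ω] (ν : Measure Ω) [Fintype I] (x : I → Ω → ℝ)
    (c : I → ℝ) (K : ℝ) (hc : ∀ i, 0 ≤ c i) (hx0 : ∀ i ω, c i = 0 → x i ω = 0)
    (hi : ∀ i, Integrable (fun ω => x i ω ^ 2) ν) (hi2 : Integrable (fun ω => (∑ i, x i ω) ^ 2) ν)
    (hb : ∀ i, ∫ ω, x i ω ^ 2 ∂ν ≤ K * c i ^ 2) :
    ∫ ω, (∑ i, x i ω) ^ 2 ∂ν ≤ K * (∑ i, c i) ^ 2 := by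
  have h1 : ∀ ω, (∑ i, x i ω) ^ 2 ≤ (∑ i, c i) * ∑ i, (c i)⁻¹ * x i ω ^ 2 := by
    intro ω
    apply Finset.sum_sq_le_sum_mul_sum_of_sq_le_mul
    · exact fun i _ => hc i
    · intro i _
      have := hc i
      positivity
    · intro i _
      by_cases h : c i = 0
      · simp [h, hx0 i ω h]
      · apply le_of_eq
        field_simp
  calc ∫ ω, (∑ i, x i ω) ^ 2 ∂ν ≤ ∫ ω, (∑ i, c i) * ∑ i, (c i)⁻¹ * x i ω ^ 2 ∂ν := by
        apply integral_mono hi2 _ h1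
        exact (integrable_finsetSum _ fun i _ => (hi i).const_mul _).const_mul _
    _ = (∑ i, c i) * ∑ i, (c i)⁻¹ * ∫ ω, x i ω ^ 2 ∂ν := by
        rw [integral_const_mul, integral_finsetSum _ fun i _ => (hi i).const_mul _]
        simp only [integral_const_mul]
    _ ≤ (∑ i, c i) * ∑ i, K * c i := by
        apply mul_le_mul_of_nonneg_left _ (Finset.sum_nonneg fun i _ => hc i)
        apply Finset.sum_le_sum
        intro i _
        by_cases h : c i = 0
        · simp [h]
        · calc (c i)⁻¹ * ∫ ω, x i ω ^ 2 ∂ν ≤ (c i)⁻¹ * (K * c i ^ 2) :=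
                mul_le_mul_of_nonneg_left (hb i) (inv_nonneg.mpr (hc i))
            _ = K * c i := by field_simp
    _ = K * (∑ i, c i) ^ 2 := by
        rw [← Finset.mul_sum]
        ring


/-- One layer: product of embedded blocks along a list. -/
noncomputable def layerProd {n m κ : ℕ} (pos : Fin κ → Fin m → Fin n) (l : List (Fin κ))
    (g : Fin κ → Matrix (Fin m → Bool) (Fin m → Bool) ℂ) :
    Matrix (Fin n → Bool) (Fin n → Bool) ℂ :=
  l.foldl (fun N k => embedBlock (pos k) (g k) * N) 1

lemma layerProd_snoc {n m κ : ℕ} (pos : Fin κ → Fin m → Fin n) (l : List (Fin κ)) (k : Fin κ)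
    (g : Fin κ → Matrix (Fin m → Bool) (Fin m → Bool) ℂ) :
    layerProd pos (l ++ [k]) g = embedBlock (pos k) (g k) * layerProd pos l g := by
  simp [layerProd, List.foldl_append]

/-- The blocks are injective and pairwise disjoint. -/
def GoodPos {n m κ : ℕ} (pos : Fin κ → Fin m → Fin n) : Prop :=
  Function.Injective (fun p : Fin κ × Fin m => pos p.1 p.2)

lemma GoodPos.inj {n m κ : ℕ} {pos : Fin κ → Fin m → Fin n} (h : GoodPos pos) (k : Fin κ) :
    Function.Injective (pos k) := by
  intro t t' htt
  have := @h (k, t) (k, t') htt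
  exact (Prod.mk.inj this).2

lemma GoodPos.disj {n m κ : ℕ} {pos : Fin κ → Fin m → Fin n} (h : GoodPos pos) {k k' : Fin κ}
    (hk : k ≠ k') (t t' : Fin m) : pos k t ≠ pos k' t' := by
  intro htt
  have := @h (k, t) (k', t') htt
  exact hk (Prod.mk.inj this).1

lemma layerProd_comm {n m κ : ℕ} {pos : Fin κ → Fin m → Fin n} (h : GoodPos pos)
    (l : List (Fin κ)) (k : Fin κ) (hk : k ∉ l)
    (A : Matrix (Fin m → Bool) (Fin m → Bool) ℂ)
    (g : Fin κ → Matrix (Fin m → Bool) (Fin m → Bool) ℂ) :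
    embedBlock (pos k) A * layerProd pos l g = layerProd pos l g * embedBlock (pos k) A := by
  induction l using List.reverseRecOn with
  | nil => simp [layerProd]
  | append_singleton l q ih =>
    simp only [List.mem_append, List.mem_singleton, not_or] at hk
    rw [layerProd_snoc, ← Matrix.mul_assoc,
      embed_comm _ _ (h.inj k) (h.inj q) (h.disj hk.2), Matrix.mul_assoc, ih hk.1,
      Matrix.mul_assoc]

lemma layerProd_mul {n m κ : ℕ} {pos : Fin κ → Fin m → Fin n} (h : GoodPos pos)
    (l : List (Fin κ)) (hl : l.Nodup)
    (g w : Fin κ → Matrix (Fin m → Bool) (Fin m → Bool) ℂ) :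
    layerProd pos l (fun k => g k * w k) = layerProd pos l g * layerProd pos l w := by
  induction l using List.reverseRecOn with
  | nil => simp [layerProd]
  | append_singleton l q ih =>
    rw [List.nodup_append] at hl
    have hq : q ∉ l := fun hq => hl.2.2 q hq q (by simp) rfl
    rw [layerProd_snoc, layerProd_snoc, layerProd_snoc, ih hl.1, ← embed_mul _ (h.inj q)]
    calc embedBlock (pos q) (g q) * embedBlock (pos q) (w q) *
          (layerProd pos l g * layerProd pos l w)
        = embedBlock (pos q) (g q) * (embedBlock (pos q) (w q) * layerProd pos l g) *
            layerProd pos l w := by simp only [Matrix.mul_assoc]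
      _ = _ := by
        rw [layerProd_comm h l q hq]
        simp only [Matrix.mul_assoc]

lemma layerProd_unitary {n m κ : ℕ} {pos : Fin κ → Fin m → Fin n} (h : GoodPos pos)
    (l : List (Fin κ)) (g : Fin κ → Matrix.unitaryGroup (Fin m → Bool) ℂ) :
    layerProd pos l (fun k => (g k).1) ∈ Matrix.unitaryGroup (Fin n → Bool) ℂ := by
  induction l using List.reverseRecOn with
  | nil => exact one_mem _
  | append_singleton l q ih =>
    rw [layerProd_snoc]
    exact mul_mem (embed_unitary _ (h.inj q) _) ih

lemma layerProd_continuous {n m κ : ℕ} (pos : Fin κ → Fin m → Fin n)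
    (l : List (Fin κ)) {X : Type*} [TopologicalSpace X]
    {f : X → Fin κ → Matrix.unitaryGroup (Fin m → Bool) ℂ} (hf : Continuous f) :
    Continuous fun x => layerProd pos l (fun k => (f x k).1) := by
  induction l using List.reverseRecOn with
  | nil => exact continuous_const
  | append_singleton l q ih =>
    simp only [layerProd_snoc]
    exact (embed_continuous (pos q) ((continuous_apply q).comp hf)).matrix_mul ih

lemma layerProd_congr {n m κ : ℕ} (pos : Fin κ → Fin m → Fin n)
    (l : List (Fin κ)) (g w : Fin κ → Matrix (Fin m → Bool) (Fin m → Bool) ℂ)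
    (h : ∀ k ∈ l, g k = w k) : layerProd pos l g = layerProd pos l w := by
  induction l using List.reverseRecOn with
  | nil => rfl
  | append_singleton l q ih =>
    rw [layerProd_snoc, layerProd_snoc, h q (by simp), ih fun k hk => h k (by simp [hk])]

section
variable {m κ : ℕ} [MeasurableSpace (Matrix.unitaryGroup (Fin m → Bool) ℂ)]
  [BorelSpace (Matrix.unitaryGroup (Fin m → Bool) ℂ)]
  (μ : Measure (Matrix.unitaryGroup (Fin m → Bool) ℂ)) [μ.IsHaarMeasure] [IsProbabilityMeasure μ]

lemma integral_update (k : Fin κ)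
    (F : (Fin κ → Matrix.unitaryGroup (Fin m → Bool) ℂ) → ℝ) (hF : Continuous F) :
    ∫ g, F g ∂(Measure.pi fun _ : Fin κ => μ)
      = ∫ g, ∫ h, F (Function.update g k h) ∂μ ∂(Measure.pi fun _ : Fin κ => μ) := by
  have h1 : ∀ g : Fin κ → Matrix.unitaryGroup (Fin m → Bool) ℂ,
      ∫ h, F (Function.update g k h) ∂μ = ∫ h, F (Pi.mulSingle k h * g) ∂μ := by
    intro g
    rw [← integral_mul_right_eq_self (fun h => F (Function.update g k h)) (g k)]
    congr 1
    ext h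
    congr 1
    ext1 q
    by_cases hq : q = k
    · subst hq
      simp
    · simp [hq]
  have hcont : Continuous (fun p : (Fin κ → Matrix.unitaryGroup (Fin m → Bool) ℂ) ×
      Matrix.unitaryGroup (Fin m → Bool) ℂ => F (Pi.mulSingle k p.2 * p.1)) := by
    apply hF.comp
    exact ((continuous_mulSingle k).comp continuous_snd).mul continuous_fst
  simp only [h1]
  rw [integral_integral_swap (continuous_integrable _ hcont)]
  simp only [integral_mul_left_eq_self (μ := Measure.pi fun _ : Fin κ => μ) F]
  simp

lemma card_ge (hm : 0 < m) : 2 ≤ Fintype.card (Fin m → Bool) := by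
  simp only [Fintype.card_fun, Fintype.card_bool, Fintype.card_fin]
  exact Nat.le_self_pow hm.ne' 2

lemma embed_fourth (hm : 0 < m) {n : ℕ} (pos : Fin m → Fin n) (b y : (Fin n → Bool) → ℂ) :
    ∫ h, ‖b ⬝ᵥ (embedBlock pos h.1 *ᵥ y)‖ ^ 4 ∂μ
      ≤ 2 / ((2 : ℝ) ^ (2 * m) - 1) * (∑ p : (Fin m → Bool) × (Fin m → Bool),
        ‖b ⬝ᵥ (embedBlock pos (Matrix.single p.1 p.2 1) *ᵥ y)‖ ^ 2) ^ 2 := by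
  have h := haar_fourth μ (card_ge hm)
    (Matrix.of fun i j => b ⬝ᵥ (embedBlock pos (Matrix.single i j 1) *ᵥ y))
  have h1 : ∀ W : Matrix.unitaryGroup (Fin m → Bool) ℂ, b ⬝ᵥ (embedBlock pos W.1 *ᵥ y)
      = ∑ i, ∑ j, W.1 i j * (b ⬝ᵥ (embedBlock pos (Matrix.single i j 1) *ᵥ y)) := by
    intro W
    rw [embed_sum]
    simp only [Matrix.sum_mulVec, dotProduct_sum, Matrix.smul_mulVec, dotProduct_smul, smul_eq_mul]
  simp only [h1, Fintype.sum_prod_type]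
  simp only [Matrix.of_apply] at h
  refine h.trans (le_of_eq ?_)
  congr 2
  simp [← pow_mul, mul_comm]

lemma layer_fourth (hm : 0 < m) {n : ℕ} {pos : Fin κ → Fin m → Fin n} (hpos : GoodPos pos)
    (l : List (Fin κ)) (hl : l.Nodup) : ∀ (b a : (Fin n → Bool) → ℂ),
    ∫ g, ‖b ⬝ᵥ (layerProd pos l (fun k => (g k).1) *ᵥ a)‖ ^ 4 ∂(Measure.pi fun _ : Fin κ => μ)
      ≤ (2 / ((2 : ℝ) ^ (2 * m) - 1)) ^ l.length * (nsq b * nsq a) ^ 2 := by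
  have hC : 0 ≤ 2 / ((2 : ℝ) ^ (2 * m) - 1) := by
    have : (1 : ℝ) ≤ 2 ^ (2 * m) := one_le_pow₀ (by norm_num)
    exact div_nonneg (by norm_num) (by linarith)
  have hcont : ∀ (l : List (Fin κ)) (b a : (Fin n → Bool) → ℂ), Continuous fun
      g : Fin κ → Matrix.unitaryGroup (Fin m → Bool) ℂ =>
        b ⬝ᵥ (layerProd pos l (fun k => (g k).1) *ᵥ a) := fun l b a =>
    continuous_const.dotProduct ((layerProd_continuous pos l continuous_id).matrix_mulVec
      continuous_const)
  induction l using List.reverseRecOn with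
  | nil =>
    intro b a
    simp only [layerProd, List.foldl_nil, Matrix.one_mulVec, List.length_nil, pow_zero, one_mul,
      integral_const, probReal_univ, smul_eq_mul]
    have := nsq_cs b a
    calc ‖b ⬝ᵥ a‖ ^ 4 = (‖b ⬝ᵥ a‖ ^ 2) ^ 2 := by ring
      _ ≤ _ := by gcongr
  | append_singleton l k ih =>
    intro b a
    rw [List.nodup_append] at hl
    have hk : k ∉ l := fun hq => hl.2.2 k hq k (by simp) rfl
    have ih := ih hl.1
    rw [integral_update μ k (fun g => ‖b ⬝ᵥ (layerProd pos (l ++ [k]) (fun k => (g k).1) *ᵥ a)‖ ^ 4)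
      ((hcont (l ++ [k]) b a).norm.pow 4)]
    have h1 : ∀ (g : Fin κ → Matrix.unitaryGroup (Fin m → Bool) ℂ)
        (h : Matrix.unitaryGroup (Fin m → Bool) ℂ),
        layerProd pos (l ++ [k]) (fun q => (Function.update g k h q).1) *ᵥ a
          = embedBlock (pos k) h.1 *ᵥ (layerProd pos l (fun q => (g q).1) *ᵥ a) := by
      intro g h
      rw [layerProd_snoc, Function.update_self, Matrix.mulVec_mulVec,
        layerProd_congr pos l _ (fun q => (g q).1)]
      intro q hq
      rw [Function.update_of_ne]
      exact fun h => hk (h ▸ hq)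
    simp only [h1]
    set x : (Fin m → Bool) × (Fin m → Bool) →
        (Fin κ → Matrix.unitaryGroup (Fin m → Bool) ℂ) → ℝ := fun p g =>
      ‖(b ᵥ* embedBlock (pos k) (Matrix.single p.1 p.2 1)) ⬝ᵥ
        (layerProd pos l (fun q => (g q).1) *ᵥ
          (embedBlock (pos k) (Matrix.single p.2 p.2 1) *ᵥ a))‖ ^ 2 with hx
    have hxc : ∀ p, Continuous (x p) := fun p => (hcont l _ _).norm.pow 2
    have h2 : ∀ p g, ‖b ⬝ᵥ (embedBlock (pos k) (Matrix.single p.1 p.2 1) *ᵥ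
        (layerProd pos l (fun q => (g q).1) *ᵥ a))‖ ^ 2 = x p g := by
      intro p g
      rw [hx]
      simp only
      rw [Matrix.mulVec_mulVec, Matrix.mulVec_mulVec, ← layerProd_comm hpos l k hk,
        ← Matrix.dotProduct_mulVec, Matrix.mulVec_mulVec, ← Matrix.mul_assoc,
        embed_mul _ (hpos.inj k), Matrix.single_mul_single_same, mul_one]
    have hci : Integrable (fun g => ∫ h, ‖b ⬝ᵥ (embedBlock (pos k) h.1 *ᵥ
        (layerProd pos l (fun q => (g q).1) *ᵥ a))‖ ^ 4 ∂μ) (Measure.pi fun _ : Fin κ => μ) := by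
      have hc : Continuous (fun p : (Fin κ → Matrix.unitaryGroup (Fin m → Bool) ℂ) ×
          Matrix.unitaryGroup (Fin m → Bool) ℂ => ‖b ⬝ᵥ (embedBlock (pos k) p.2.1 *ᵥ
        (layerProd pos l (fun q => (p.1 q).1) *ᵥ a))‖ ^ 4) :=
        (continuous_const.dotProduct ((embed_continuous _ continuous_snd).matrix_mulVec
          ((layerProd_continuous pos l continuous_fst).matrix_mulVec continuous_const))).norm.pow 4
      exact (continuous_integrable ((Measure.pi fun _ : Fin κ => μ).prod μ) hc).integral_prod_left
    have hsumc : Continuous (fun g => (∑ p, x p g) ^ 2) :=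
      (continuous_finsetSum _ fun p _ => hxc p).pow 2
    set c : (Fin m → Bool) × (Fin m → Bool) → ℝ := fun p =>
      nsq (b ᵥ* embedBlock (pos k) (Matrix.single p.1 p.2 1)) *
        nsq (embedBlock (pos k) (Matrix.single p.2 p.2 1) *ᵥ a) with hc
    have hc0 : ∀ p, 0 ≤ c p := fun p => mul_nonneg (nsq_nonneg _) (nsq_nonneg _)
    have hcsum : ∑ p, c p = nsq b * nsq a := by
      rw [Fintype.sum_prod_type, Finset.sum_comm]
      simp only [hc, ← Finset.sum_mul, sum_nsq_left _ (hpos.inj k)]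
      rw [← Finset.mul_sum, sum_nsq_right _ (hpos.inj k)]
    have hmink : ∫ g, (∑ p, x p g) ^ 2 ∂(Measure.pi fun _ : Fin κ => μ)
        ≤ (2 / ((2 : ℝ) ^ (2 * m) - 1)) ^ l.length * (∑ p, c p) ^ 2 := by
      apply mink _ x c _ hc0
      · intro p g hp
        have := nsq_cs (b ᵥ* embedBlock (pos k) (Matrix.single p.1 p.2 1))
          (layerProd pos l (fun q => (g q).1) *ᵥ
          (embedBlock (pos k) (Matrix.single p.2 p.2 1) *ᵥ a))
        rw [nsq_unitary (layerProd_unitary hpos l g)] at this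
        exact le_antisymm (this.trans hp.le) (by positivity)
      · exact fun p => continuous_integrable _ ((hxc p).pow 2)
      · exact continuous_integrable _ hsumc
      · intro p
        have := ih (b ᵥ* embedBlock (pos k) (Matrix.single p.1 p.2 1))
          (embedBlock (pos k) (Matrix.single p.2 p.2 1) *ᵥ a)
        simpa only [hx, ← pow_mul] using this
    calc _ ≤ ∫ g, 2 / ((2 : ℝ) ^ (2 * m) - 1) * (∑ p, x p g) ^ 2
          ∂(Measure.pi fun _ : Fin κ => μ) := by
          apply integral_mono hci ((continuous_integrable _ hsumc).const_mul _)
          intro g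
          have := embed_fourth μ hm (pos k) b (layerProd pos l (fun q => (g q).1) *ᵥ a)
          simp only [h2] at this
          exact this
      _ ≤ 2 / ((2 : ℝ) ^ (2 * m) - 1) *
          ((2 / ((2 : ℝ) ^ (2 * m) - 1)) ^ l.length * (∑ p, c p) ^ 2) := by
          rw [integral_const_mul]
          exact mul_le_mul_of_nonneg_left hmink hC
      _ = _ := by
          rw [hcsum, List.length_append, List.length_singleton, pow_succ]
          ring

end


open scoped MatrixOrder in
lemma psd_factor {α : Type} [Fintype α] [DecidableEq α] {A : Matrix α α ℂ} (hA : A.PosSemidef) :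
    ∃ B, A = Bᴴ * B := by
  exact CStarAlgebra.nonneg_iff_eq_star_mul_self.mp hA.nonneg

lemma blockPos_surj (m κ : ℕ) (h : 0 < m * κ) (d : ℕ) (q : Fin (m * κ)) :
    ∃ (k : Fin κ) (t : Fin m), blockPos m κ h d k.val t = q := by
  have hm : 0 < m := Nat.pos_of_mul_pos_right h
  have hs : d % 2 * (m / 2) ≤ m * κ := by
    have h1 : d % 2 ≤ 1 := by lia
    have h2 : m / 2 ≤ m := Nat.div_le_self _ _
    have hk : 1 ≤ κ := Nat.pos_of_mul_pos_left h
    calc d % 2 * (m / 2) ≤ 1 * m := Nat.mul_le_mul h1 h2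
      _ = m * 1 := by ring
      _ ≤ m * κ := Nat.mul_le_mul_left _ hk
  set s := d % 2 * (m / 2) with hsdef
  set r := (q.val + (m * κ - s)) % (m * κ) with hr
  have hrlt : r < m * κ := Nat.mod_lt _ h
  refine ⟨⟨r / m, Nat.div_lt_of_lt_mul hrlt⟩, ⟨r % m, Nat.mod_lt _ hm⟩, ?_⟩
  apply Fin.ext
  simp only [blockPos]
  rw [← hsdef]
  have e1 : r / m * m + s + r % m = r + s := by
    have := Nat.div_add_mod' r m
    lia
  rw [e1, hr, Nat.mod_add_mod]
  have e2 : q.val + (m * κ - s) + s = q.val + m * κ := by lia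
  rw [e2, Nat.add_mod_right, Nat.mod_eq_of_lt q.isLt]

lemma blockPos_good (m κ : ℕ) (h : 0 < m * κ) (d : ℕ) :
    GoodPos (fun k : Fin κ => blockPos m κ h d k.val) := by
  have : Function.Surjective (fun p : Fin κ × Fin m => blockPos m κ h d p.1.val p.2) := by
    intro q
    obtain ⟨k, t, hkt⟩ := blockPos_surj m κ h d q
    exact ⟨(k, t), hkt⟩
  exact ((Fintype.bijective_iff_surjective_and_card _).mpr ⟨this, by simp [mul_comm]⟩).1

/-- Circuit along a list of layers. -/
noncomputable def circ (m κ : ℕ) {L : ℕ} (h : 0 < m * κ) (l : List (Fin L))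
    (Ws : Fin L → Fin κ → Matrix (Fin m → Bool) (Fin m → Bool) ℂ) :
    Matrix (Fin (m * κ) → Bool) (Fin (m * κ) → Bool) ℂ :=
  l.foldl (fun M d =>
    layerProd (fun k : Fin κ => blockPos m κ h d.val k.val) (List.finRange κ) (Ws d) * M) 1

lemma alaCircuit_eq (m κ L : ℕ) (h : 0 < m * κ)
    (Ws : Fin L → Fin κ → Matrix (Fin m → Bool) (Fin m → Bool) ℂ) :
    alaCircuit m κ L h Ws = circ m κ h (List.finRange L) Ws := rfl

lemma circ_snoc (m κ : ℕ) {L : ℕ} (h : 0 < m * κ) (l : List (Fin L)) (d : Fin L)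
    (Ws : Fin L → Fin κ → Matrix (Fin m → Bool) (Fin m → Bool) ℂ) :
    circ m κ h (l ++ [d]) Ws = layerProd (fun k : Fin κ => blockPos m κ h d.val k.val)
      (List.finRange κ) (Ws d) * circ m κ h l Ws := by
  simp [circ, List.foldl_append]

lemma circ_congr (m κ : ℕ) {L : ℕ} (h : 0 < m * κ) (l : List (Fin L))
    (Ws Ws' : Fin L → Fin κ → Matrix (Fin m → Bool) (Fin m → Bool) ℂ)
    (hW : ∀ d ∈ l, Ws d = Ws' d) : circ m κ h l Ws = circ m κ h l Ws' := by
  induction l using List.reverseRecOn with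
  | nil => rfl
  | append_singleton l q ih =>
    rw [circ_snoc, circ_snoc, hW q (by simp), ih fun k hk => hW k (by simp [hk])]

lemma circ_unitary (m κ : ℕ) {L : ℕ} (h : 0 < m * κ) (l : List (Fin L))
    (Ws : Fin L × Fin κ → Matrix.unitaryGroup (Fin m → Bool) ℂ) :
    circ m κ h l (fun d k => (Ws (d, k)).1)
      ∈ Matrix.unitaryGroup (Fin (m * κ) → Bool) ℂ := by
  induction l using List.reverseRecOn with
  | nil => exact one_mem _
  | append_singleton l q ih =>
    rw [circ_snoc]
    exact mul_mem (layerProd_unitary (blockPos_good m κ h q) _ (fun k => Ws (q, k))) ih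

lemma circ_continuous (m κ : ℕ) {L : ℕ} (h : 0 < m * κ) (l : List (Fin L)) :
    Continuous fun Ws : Fin L × Fin κ → Matrix.unitaryGroup (Fin m → Bool) ℂ =>
      circ m κ h l (fun d k => (Ws (d, k)).1) := by
  induction l using List.reverseRecOn with
  | nil => exact continuous_const
  | append_singleton l q ih =>
    simp only [circ_snoc]
    exact (layerProd_continuous _ (List.finRange κ)
      (f := fun Ws : Fin L × Fin κ → Matrix.unitaryGroup (Fin m → Bool) ℂ => fun k => Ws (q, k))
      (by fun_prop)).matrix_mul ih

/-- Put blocks into the last layer only. -/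
noncomputable def lastBlocks {G : Type} [One G] {L κ : ℕ} (g : Fin κ → G) :
    Fin (L + 1) × Fin κ → G := fun p => if p.1 = Fin.last L then g p.2 else 1

/-- Multiplying the last layer. -/
lemma circ_last (m κ L : ℕ) (h : 0 < m * κ)
    (g : Fin κ → Matrix.unitaryGroup (Fin m → Bool) ℂ)
    (Ws : Fin (L + 1) × Fin κ → Matrix.unitaryGroup (Fin m → Bool) ℂ) :
    circ m κ h (List.finRange (L + 1)) (fun d k => ((lastBlocks g * Ws : Fin (L + 1) × Fin κ →
        Matrix.unitaryGroup (Fin m → Bool) ℂ) (d, k)).1)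
      = layerProd (fun k : Fin κ => blockPos m κ h L k.val) (List.finRange κ) (fun k => (g k).1)
        * circ m κ h (List.finRange (L + 1)) (fun d k => (Ws (d, k)).1) := by
  rw [List.finRange_succ_last, circ_snoc, circ_snoc, ← Matrix.mul_assoc]
  congr 1
  · simp only [Fin.val_last]
    rw [← layerProd_mul (blockPos_good m κ h L) _ (List.nodup_finRange κ)]
    congr 1
    ext1 k
    simp [lastBlocks]
  · apply circ_congr
    intro d hd
    ext1 k
    have hd' : d ≠ Fin.last L := by
      rw [List.mem_map] at hd
      obtain ⟨e, -, rfl⟩ := hd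
      exact (Fin.castSucc_lt_last e).ne
    simp [lastBlocks, hd']

lemma layerProd_single {n m κ : ℕ} (pos : Fin κ → Fin m → Fin n) (l : List (Fin κ)) (hl : l.Nodup)
    (k : Fin κ) (A : Matrix (Fin m → Bool) (Fin m → Bool) ℂ) :
    layerProd pos l (fun q => if q = k then A else 1)
      = if k ∈ l then embedBlock (pos k) A else 1 := by
  induction l using List.reverseRecOn with
  | nil => simp [layerProd]
  | append_singleton l q ih =>
    rw [List.nodup_append] at hl
    have hq : q ∉ l := fun hq => hl.2.2 q hq q (by simp) rfl
    rw [layerProd_snoc, ih hl.1]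
    by_cases hqk : q = k
    · subst hqk
      simp [hq]
    · have : k ≠ q := fun h => hqk h.symm
      simp [hqk, this, embed_one]

lemma conj_weighted {α : Type} [Fintype α] [DecidableEq α] (E M : Matrix α α ℂ) (s : α → ℂ)
    (f : α → α) (hE : ∀ v x, (E *ᵥ v) x = s x * v (f x)) (x y : α) :
    (E * M * Eᴴ) x y = s x * star (s y) * M (f x) (f y) := by
  have h1 : ∀ (N : Matrix α α ℂ) x y, (E * N) x y = s x * N (f x) y := by
    intro N x y
    exact hE (fun z => N z y) x
  have h2 : (E * M * Eᴴ) x y = star ((E * (E * M)ᴴ) y x) := by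
    rw [← Matrix.conjTranspose_apply, Matrix.conjTranspose_mul,
      Matrix.conjTranspose_conjTranspose]
  rw [h2, h1, Matrix.conjTranspose_apply, h1]
  simp only [star_mul', star_star]
  ring

/-- Flip bit `t`. -/
def flipBit {n : ℕ} (t : Fin n) (x : Fin n → Bool) : Fin n → Bool := Function.update x t (!x t)

lemma flipBit_invol {n : ℕ} (t : Fin n) : Function.Involutive (flipBit t) := by
  intro x
  simp [flipBit]

lemma const_of_flip {n : ℕ} (f : (Fin n → Bool) → ℂ) (hf : ∀ t x, f (flipBit t x) = f x)
    (x y : Fin n → Bool) : f x = f y := by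
  have key : ∀ S : Finset (Fin n), f (S.piecewise y x) = f x := by
    intro S
    induction S using Finset.induction_on with
    | empty => simp
    | insert q S hq ih =>
      rw [Finset.piecewise_insert, ← ih]
      by_cases h : y q = S.piecewise y x q
      · rw [h, Function.update_eq_self]
      · rw [← hf q (S.piecewise y x)]
        congr 1
        unfold flipBit
        congr 1
        cases hy : y q <;> cases hz : S.piecewise y x q <;> simp_all
  have := key Finset.univ
  rw [Finset.piecewise_univ] at this
  exact this.symm

/-- Sign unitary. -/
noncomputable def signU {m : ℕ} (t : Fin m) : Matrix.unitaryGroup (Fin m → Bool) ℂ :=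
  ⟨Matrix.diagonal (fun z => if z t then -1 else 1), by
    rw [Matrix.mem_unitaryGroup_iff, Matrix.star_eq_conjTranspose, Matrix.diagonal_conjTranspose,
      Matrix.diagonal_mul_diagonal, ← Matrix.diagonal_one]
    congr 1
    ext z
    by_cases h : z t <;> simp [h]⟩

lemma embed_signU {n m : ℕ} (pos : Fin m → Fin n) (hp : Function.Injective pos) (t : Fin m)
    (v : (Fin n → Bool) → ℂ) (x : Fin n → Bool) :
    (embedBlock pos (signU t).1 *ᵥ v) x = (if x (pos t) then -1 else 1) * v (id x) := by
  rw [embed_mulVec pos hp, Finset.sum_eq_single (x ∘ pos)]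
  · have : Function.extend pos (x ∘ pos) x = x := by
      ext q
      by_cases hq : ∃ t, pos t = q
      · obtain ⟨t, rfl⟩ := hq
        simp [hp.extend_apply]
      · rw [Function.extend_apply' _ _ _ hq]
    rw [this]
    simp [signU]
  · intro z _ hz
    simp only [signU]
    rw [Matrix.diagonal_apply_ne' _ hz, zero_mul]
  · simp

lemma embed_flipU {n m : ℕ} (pos : Fin m → Fin n) (hp : Function.Injective pos) (t : Fin m)
    (v : (Fin n → Bool) → ℂ) (x : Fin n → Bool) :
    (embedBlock pos (permU (flipBit_invol t).toPerm).1 *ᵥ v) x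
      = 1 * v (flipBit (pos t) x) := by
  have hent : ∀ y z : Fin m → Bool, (permU (flipBit_invol t).toPerm).1 y z
      = if z = flipBit t y then 1 else 0 := by
    intro y z
    have := permU_mul (flipBit_invol t).toPerm 1 y z
    rw [mul_one] at this
    rw [this]
    change (1 : Matrix (Fin m → Bool) (Fin m → Bool) ℂ) (flipBit t y) z = _
    rw [Matrix.one_apply]
    simp only [eq_comm]
  rw [embed_mulVec pos hp, Finset.sum_eq_single (flipBit t (x ∘ pos))]
  · have : Function.extend pos (flipBit t (x ∘ pos)) x = flipBit (pos t) x := by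
      ext q
      by_cases hq : ∃ t, pos t = q
      · obtain ⟨t', rfl⟩ := hq
        rw [hp.extend_apply]
        by_cases htt : t' = t
        · subst htt
          simp [flipBit]
        · simp [flipBit, htt, hp.eq_iff]
      · rw [Function.extend_apply' _ _ _ hq]
        have : q ≠ pos t := fun h => hq ⟨t, h.symm⟩
        simp [flipBit, this]
    rw [this, hent, if_pos rfl]
  · intro z _ hz
    rw [hent, if_neg hz, zero_mul]
  · simp

section
variable {m κ L : ℕ} [MeasurableSpace (Matrix.unitaryGroup (Fin m → Bool) ℂ)]
  [BorelSpace (Matrix.unitaryGroup (Fin m → Bool) ℂ)]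
  (μ : Measure (Matrix.unitaryGroup (Fin m → Bool) ℂ)) [μ.IsHaarMeasure] [IsProbabilityMeasure μ]

lemma circ_fourth (hm : 0 < m) (h : 0 < m * κ) (b a : (Fin (m * κ) → Bool) → ℂ) :
    ∫ Ws, ‖b ⬝ᵥ (circ m κ h (List.finRange (L + 1)) (fun d k => (Ws (d, k)).1) *ᵥ a)‖ ^ 4
        ∂(Measure.pi fun _ : Fin (L + 1) × Fin κ => μ)
      ≤ (2 / ((2 : ℝ) ^ (2 * m) - 1)) ^ κ * (nsq b * nsq a) ^ 2 := by
  set F : (Fin (L + 1) × Fin κ → Matrix.unitaryGroup (Fin m → Bool) ℂ) → ℝ := fun Ws =>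
    ‖b ⬝ᵥ (circ m κ h (List.finRange (L + 1)) (fun d k => (Ws (d, k)).1) *ᵥ a)‖ ^ 4 with hF
  have hFc : Continuous F := (continuous_const.dotProduct
    ((circ_continuous m κ h _).matrix_mulVec continuous_const)).norm.pow 4
  have hlc : Continuous (fun g : Fin κ → Matrix.unitaryGroup (Fin m → Bool) ℂ =>
      (lastBlocks g : Fin (L + 1) × Fin κ → Matrix.unitaryGroup (Fin m → Bool) ℂ)) := by
    refine continuous_pi fun p => ?_
    unfold lastBlocks
    split_ifs <;> fun_prop
  have hcont : Continuous (fun p : (Fin κ → Matrix.unitaryGroup (Fin m → Bool) ℂ) ×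
      (Fin (L + 1) × Fin κ → Matrix.unitaryGroup (Fin m → Bool) ℂ) =>
        F (lastBlocks p.1 * p.2)) :=
    hFc.comp ((hlc.comp continuous_fst).mul continuous_snd)
  have hIntg := continuous_integrable ((Measure.pi fun _ : Fin κ => μ).prod
    (Measure.pi fun _ : Fin (L + 1) × Fin κ => μ)) hcont
  have h1 : ∫ Ws, F Ws ∂(Measure.pi fun _ : Fin (L + 1) × Fin κ => μ)
      = ∫ Ws, ∫ g, F (lastBlocks g * Ws) ∂(Measure.pi fun _ : Fin κ => μ)
        ∂(Measure.pi fun _ : Fin (L + 1) × Fin κ => μ) := by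
    rw [← integral_integral_swap hIntg]
    simp only [integral_mul_left_eq_self (μ := Measure.pi fun _ : Fin (L + 1) × Fin κ => μ) F]
    simp
  rw [h1]
  calc _ ≤ ∫ _Ws, (2 / ((2 : ℝ) ^ (2 * m) - 1)) ^ κ * (nsq b * nsq a) ^ 2
        ∂(Measure.pi fun _ : Fin (L + 1) × Fin κ => μ) := by
        apply integral_mono hIntg.integral_prod_right (integrable_const _)
        intro Ws
        have := layer_fourth μ hm (blockPos_good m κ h L) (List.finRange κ) (List.nodup_finRange κ)
          b (circ m κ h (List.finRange (L + 1)) (fun d k => (Ws (d, k)).1) *ᵥ a)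
        rw [nsq_unitary (circ_unitary m κ h _ Ws), List.length_finRange] at this
        simp only [hF, circ_last]
        simp only [Matrix.mulVec_mulVec] at this
        exact this
    _ = _ := by simp

lemma trace_eq_sum {α : Type} [Fintype α] [DecidableEq α] (U B C : Matrix α α ℂ) :
    (U * (Bᴴ * B) * Uᴴ * (Cᴴ * C)).trace
      = ((∑ p : α × α, ‖C p.1 ⬝ᵥ (U *ᵥ fun q => Bᴴ q p.2)‖ ^ 2 : ℝ) : ℂ) := by
  have h1 : (U * (Bᴴ * B) * Uᴴ * (Cᴴ * C)).trace = ((C * (U * Bᴴ)) * (C * (U * Bᴴ))ᴴ).trace := by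
    rw [Matrix.conjTranspose_mul, Matrix.conjTranspose_mul, Matrix.conjTranspose_conjTranspose,
      ← Matrix.mul_assoc _ Cᴴ C, Matrix.trace_mul_comm]
    simp only [Matrix.mul_assoc]
  rw [h1, ← frob_eq, Fintype.sum_prod_type]
  rfl

lemma sum_nsq_rows {α : Type} [Fintype α] [DecidableEq α] (C : Matrix α α ℂ) :
    ((∑ i, nsq (C i) : ℝ) : ℂ) = (Cᴴ * C).trace := by
  rw [Matrix.trace_mul_comm, ← frob_eq]
  rfl

lemma sum_nsq_cols {α : Type} [Fintype α] [DecidableEq α] (B : Matrix α α ℂ) :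
    ∑ i, nsq (fun q => Bᴴ q i) = ∑ i, nsq (B i) := by
  simp [nsq]

lemma second_moment (hm : 0 < m) (h : 0 < m * κ)
    (ρ₀ σ : Matrix (Fin (m * κ) → Bool) (Fin (m * κ) → Bool) ℂ)
    (hρ : ρ₀.PosSemidef) (hρtr : ρ₀.trace = 1) (hσ : σ.PosSemidef) (hσtr : σ.trace = 1) :
    ∫ Ws : Fin (L + 1) × Fin κ → Matrix.unitaryGroup (Fin m → Bool) ℂ,
      ((circ m κ h (List.finRange (L + 1)) (fun d k => (Ws (d, k)).1) * ρ₀ *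
        (circ m κ h (List.finRange (L + 1)) (fun d k => (Ws (d, k)).1))ᴴ * σ).trace.re) ^ 2
        ∂(Measure.pi fun _ : Fin (L + 1) × Fin κ => μ)
      ≤ (2 / ((2 : ℝ) ^ (2 * m) - 1)) ^ κ := by
  obtain ⟨B, rfl⟩ : ∃ B, ρ₀ = Bᴴ * B := by
    exact psd_factor hρ
  obtain ⟨C, rfl⟩ : ∃ B, σ = Bᴴ * B := by
    exact psd_factor hσ
  have hB : ∑ i, nsq (B i) = 1 := by
    have := sum_nsq_rows B
    rw [hρtr] at this
    exact_mod_cast this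
  have hC : ∑ i, nsq (C i) = 1 := by
    have := sum_nsq_rows C
    rw [hσtr] at this
    exact_mod_cast this
  simp only [trace_eq_sum, Complex.ofReal_re]
  have hcc : ∀ (b a : (Fin (m * κ) → Bool) → ℂ), Continuous fun
      Ws : Fin (L + 1) × Fin κ → Matrix.unitaryGroup (Fin m → Bool) ℂ =>
        ‖b ⬝ᵥ (circ m κ h (List.finRange (L + 1)) (fun d k => (Ws (d, k)).1) *ᵥ a)‖ ^ 2 :=
    fun b a => (continuous_const.dotProduct
      ((circ_continuous m κ h _).matrix_mulVec continuous_const)).norm.pow 2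
  have hmk := mink (Measure.pi fun _ : Fin (L + 1) × Fin κ => μ)
    (fun (p : (Fin (m * κ) → Bool) × (Fin (m * κ) → Bool)) Ws => ‖C p.1 ⬝ᵥ
      (circ m κ h (List.finRange (L + 1)) (fun d k => (Ws (d, k)).1) *ᵥ fun q => Bᴴ q p.2)‖ ^ 2)
    (fun p => nsq (C p.1) * nsq (fun q => Bᴴ q p.2)) ((2 / ((2 : ℝ) ^ (2 * m) - 1)) ^ κ)
    (fun p => mul_nonneg (nsq_nonneg _) (nsq_nonneg _))
    (fun p Ws hp => by
      have := nsq_cs (C p.1) (circ m κ h (List.finRange (L + 1)) (fun d k => (Ws (d, k)).1) *ᵥ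
        fun q => Bᴴ q p.2)
      rw [nsq_unitary (circ_unitary m κ h _ Ws)] at this
      exact le_antisymm (this.trans hp.le) (by positivity))
    (fun p => continuous_integrable _ ((hcc _ _).pow 2))
    (continuous_integrable _ ((continuous_finsetSum _ fun p _ => hcc _ _).pow 2))
    (fun p => by
      simp only [← pow_mul]
      exact circ_fourth μ hm h _ _)
  have hsum : ∑ p : (Fin (m * κ) → Bool) × (Fin (m * κ) → Bool),
      nsq (C p.1) * nsq (fun q => Bᴴ q p.2) = 1 := by
    rw [Fintype.sum_prod_type]
    simp only [← Finset.mul_sum, sum_nsq_cols, hB, mul_one, hC]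
  rw [hsum] at hmk
  simpa using hmk

lemma first_moment_circ (h : 0 < m * κ)
    (ρ₀ σ : Matrix (Fin (m * κ) → Bool) (Fin (m * κ) → Bool) ℂ)
    (hρtr : ρ₀.trace = 1) (hσtr : σ.trace = 1) :
    ∫ Ws : Fin (L + 1) × Fin κ → Matrix.unitaryGroup (Fin m → Bool) ℂ,
      ((circ m κ h (List.finRange (L + 1)) (fun d k => (Ws (d, k)).1) * ρ₀ *
        (circ m κ h (List.finRange (L + 1)) (fun d k => (Ws (d, k)).1))ᴴ * σ).trace.re)
        ∂(Measure.pi fun _ : Fin (L + 1) × Fin κ => μ)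
      = 1 / (2 : ℝ) ^ (m * κ) := by
  set ν := Measure.pi fun _ : Fin (L + 1) × Fin κ => μ with hν
  set M : (Fin (L + 1) × Fin κ → Matrix.unitaryGroup (Fin m → Bool) ℂ) →
      Matrix (Fin (m * κ) → Bool) (Fin (m * κ) → Bool) ℂ := fun Ws =>
    circ m κ h (List.finRange (L + 1)) (fun d k => (Ws (d, k)).1) * ρ₀ *
        (circ m κ h (List.finRange (L + 1)) (fun d k => (Ws (d, k)).1))ᴴ with hM
  have hMc : Continuous M := ((circ_continuous m κ h _).matrix_mul continuous_const).matrix_mul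
    (circ_continuous m κ h _).matrix_conjTranspose
  have hMe : ∀ x y, Integrable (fun Ws => M Ws x y) ν := fun x y =>
    continuous_integrable _ (hMc.matrix_elem x y)
  have hMtr : ∀ Ws, (M Ws).trace = 1 := by
    intro Ws
    have := Matrix.mem_unitaryGroup_iff'.mp (circ_unitary m κ h (List.finRange (L + 1)) Ws)
    rw [Matrix.star_eq_conjTranspose] at this
    rw [hM]
    simp only
    rw [Matrix.trace_mul_comm, ← Matrix.mul_assoc, this, Matrix.one_mul, hρtr]
  have hinv : ∀ (k : Fin κ) (u : Matrix.unitaryGroup (Fin m → Bool) ℂ) x y,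
      ∫ Ws, M Ws x y ∂ν = ∫ Ws, (embedBlock (blockPos m κ h L k.val) u.1 * M Ws *
        (embedBlock (blockPos m κ h L k.val) u.1)ᴴ) x y ∂ν := by
    intro k u x y
    rw [← integral_mul_left_eq_self (μ := ν) (fun Ws => M Ws x y)
      (lastBlocks fun q => if q = k then u else 1)]
    congr 1
    ext Ws
    have hl := layerProd_single (fun k : Fin κ => blockPos m κ h L k.val) (List.finRange κ)
      (List.nodup_finRange κ) k u.1
    rw [if_pos (List.mem_finRange k)] at hl
    have hl2 : (fun q => if q = k then u.1 else 1)
        = fun q => ((if q = k then u else 1 : Matrix.unitaryGroup (Fin m → Bool) ℂ)).1 := by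
      ext1 q
      split_ifs <;> rfl
    rw [hl2] at hl
    simp only [hM, circ_last]
    rw [hl]
    simp only [Matrix.conjTranspose_mul, Matrix.mul_assoc]
  set R : (Fin (m * κ) → Bool) → (Fin (m * κ) → Bool) → ℂ := fun x y => ∫ Ws, M Ws x y ∂ν with hR
  have hoff : ∀ x y, x ≠ y → R x y = 0 := by
    intro x y hxy
    obtain ⟨q, hq⟩ := Function.ne_iff.mp hxy
    obtain ⟨k, t, rfl⟩ := blockPos_surj m κ h L q
    have h1 := hinv k (signU t) x y
    simp only [conj_weighted _ _ _ _
      (embed_signU _ ((blockPos_good m κ h L).inj k) t)] at h1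
    rw [integral_const_mul] at h1
    change R x y = _ * R x y at h1
    have hs : (if x (blockPos m κ h L k.val t) then (-1 : ℂ) else 1)
        * star (if y (blockPos m κ h L k.val t) then (-1 : ℂ) else 1) = -1 := by
      cases hx : x (blockPos m κ h L k.val t) <;> cases hy : y (blockPos m κ h L k.val t) <;>
        simp [hx, hy] at hq ⊢
    have h2 : R x y = - R x y := by
      rw [hs, neg_one_mul] at h1
      exact h1
    exact self_eq_neg.mp h2
  have hflip : ∀ q x, R (flipBit q x) (flipBit q x) = R x x := by
    intro q x
    obtain ⟨k, t, rfl⟩ := blockPos_surj m κ h L q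
    have h1 := hinv k (permU (flipBit_invol t).toPerm) x x
    simp only [conj_weighted _ _ (fun _ => 1) (flipBit (blockPos m κ h L k.val t))
      (embed_flipU _ ((blockPos_good m κ h L).inj k) t), star_one, one_mul] at h1
    exact h1.symm
  have hconst := const_of_flip (fun x => R x x) hflip
  have htr : ∑ x, R x x = 1 := by
    rw [hR]
    simp only
    rw [← integral_finsetSum _ fun x _ => hMe x x]
    have : ∀ Ws, ∑ x, M Ws x x = 1 := hMtr
    simp [this]
  have hval : ∀ x, R x x = 1 / 2 ^ (m * κ) := by
    intro x
    have : ∑ y : Fin (m * κ) → Bool, R y y = ∑ y : Fin (m * κ) → Bool, R x x :=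
      Finset.sum_congr rfl fun y _ => hconst y x
    rw [this] at htr
    simp only [Finset.sum_const, Finset.card_univ, nsmul_eq_mul, Fintype.card_fun,
      Fintype.card_bool, Fintype.card_fin] at htr
    push_cast at htr
    exact eq_one_div_of_mul_eq_one_right htr
  have hT : ∫ Ws, (M Ws * σ).trace ∂ν = 1 / 2 ^ (m * κ) := by
    simp only [Matrix.trace, Matrix.diag_apply, Matrix.mul_apply]
    rw [integral_finsetSum _ fun x _ => integrable_finsetSum _ fun y _ => (hMe x y).mul_const _]
    calc ∑ x, ∫ Ws, ∑ y, M Ws x y * σ y x ∂ν = ∑ x, 1 / 2 ^ (m * κ) * σ x x := by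
          refine Finset.sum_congr rfl fun x _ => ?_
          rw [integral_finsetSum _ fun y _ => (hMe x y).mul_const _]
          simp only [integral_mul_const]
          rw [Finset.sum_eq_single x]
          · rw [← hval x]
          · intro y _ hy
            have := hoff x y hy.symm
            simp only [hR] at this
            rw [this, zero_mul]
          · simp
      _ = _ := by
          rw [← Finset.mul_sum]
          have : ∑ x, σ x x = 1 := hσtr
          rw [this, mul_one]
  have hIntg : Integrable (fun Ws => (M Ws * σ).trace) ν :=
    continuous_integrable _ (hMc.matrix_mul continuous_const).matrix_trace
  have hre := Complex.reCLM.integral_comp_comm hIntg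
  simp only [Complex.reCLM_apply] at hre
  rw [hre, hT]
  have : (1 / 2 ^ (m * κ) : ℂ) = ((1 / 2 ^ (m * κ) : ℝ) : ℂ) := by push_cast; rfl
  rw [this, Complex.ofReal_re]

end

end CircuitFacts


/-- For the alternating layered ansatz on `n = mκ` qubits with `L` layers
whose `m`-qubit blocks are independent Haar-random unitaries, the variance (over all blocks)
of the fidelity kernel `Tr[U ρ₀ U† σ]`, with `ρ₀` pure and `σ` a fixed density operator,
satisfies `Var[k_Q] ≤ 2^κ/(2^{2m}−1)^κ − 1/2^{2n}`. -/
theorem ala_fidelity_kernel_variance_le (m κ L : ℕ) (hm : 0 < m) (hκ : 0 < κ) (hL : 0 < L)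
    [MeasurableSpace (Matrix.unitaryGroup (Fin m → Bool) ℂ)]
    [BorelSpace (Matrix.unitaryGroup (Fin m → Bool) ℂ)]
    (μ : Measure (Matrix.unitaryGroup (Fin m → Bool) ℂ))
    [μ.IsHaarMeasure] [IsProbabilityMeasure μ]
    (ρ₀ σ : Matrix (Fin (m * κ) → Bool) (Fin (m * κ) → Bool) ℂ)
    (hρ : ρ₀.PosSemidef) (hρtr : ρ₀.trace = 1) (hρpure : ρ₀ * ρ₀ = ρ₀)
    (hσ : σ.PosSemidef) (hσtr : σ.trace = 1) :
    (∫ Ws : (Fin L × Fin κ) → Matrix.unitaryGroup (Fin m → Bool) ℂ,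
        (((alaCircuit m κ L (Nat.mul_pos hm hκ) (fun d k => (Ws (d, k) : _)) * ρ₀ *
            star (alaCircuit m κ L (Nat.mul_pos hm hκ) (fun d k => (Ws (d, k) : _))) *
            σ).trace).re) ^ 2
        ∂(Measure.pi fun _ : Fin L × Fin κ => μ))
      - (∫ Ws : (Fin L × Fin κ) → Matrix.unitaryGroup (Fin m → Bool) ℂ,
          (((alaCircuit m κ L (Nat.mul_pos hm hκ) (fun d k => (Ws (d, k) : _)) * ρ₀ *
              star (alaCircuit m κ L (Nat.mul_pos hm hκ) (fun d k => (Ws (d, k) : _))) *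
              σ).trace).re)
          ∂(Measure.pi fun _ : Fin L × Fin κ => μ)) ^ 2
      ≤ (2 : ℝ) ^ κ / ((2 : ℝ) ^ (2 * m) - 1) ^ κ - 1 / (2 : ℝ) ^ (2 * (m * κ)) := by
  obtain ⟨L', rfl⟩ : ∃ L', L = L' + 1 := ⟨L - 1, by lia⟩
  have h1 := second_moment (L := L') μ hm (Nat.mul_pos hm hκ) ρ₀ σ hρ hρtr hσ hσtr
  have h2 := first_moment_circ (L := L') μ (Nat.mul_pos hm hκ) ρ₀ σ hρtr hσtr
  simp only [alaCircuit_eq, Matrix.star_eq_conjTranspose]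
  rw [h2, ← div_pow]
  have h3 : (1 / (2 : ℝ) ^ (m * κ)) ^ 2 = 1 / (2 : ℝ) ^ (2 * (m * κ)) := by
    rw [div_pow, one_pow, ← pow_mul, mul_comm 2]
  rw [h3]
  exact sub_le_sub_right h1 _
end

section
/- Let W be Haar-random on the unitary group of a d-dimensional factor S_s, where S_s = S_h ⊗ S_h̄ with S_h ⊂ S' and S_h̄ ⊂ S̄' each of dimension d^{1/2}. Then for any operator A on the full space S' ⊗ S̄', E_W[Tr[Tr_{S̄'}[W A W†] Tr_{S̄'}[W A W†]]] = (d^{1/2}/(d+1))·(Tr[Tr_{S̄'∪S_h}[A] Tr_{S̄'∪S_h}[A]] + Tr[Tr_{S̄'/S_h̄}[A] Tr_{S̄'/S_h̄}[A]]). -/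
open MeasureTheory Matrix

section

variable {α β γ δ : Type*} [Fintype α] [DecidableEq α] [Fintype β] [DecidableEq β]
    [Fintype γ] [DecidableEq γ] [Fintype δ] [DecidableEq δ]

/-- Embed an operator `W` on `S_s = S_h ⊗ S_h̄` (the factors `α` and `γ`) into the full space
`S' ⊗ S̄' = (α × β) × (γ × δ)`, acting as the identity on `β` and `δ`. -/
noncomputable def embedStraddle (W : Matrix (α × γ) (α × γ) ℂ) :
    Matrix ((α × β) × (γ × δ)) ((α × β) × (γ × δ)) ℂ :=
  fun p q => W (p.1.1, p.2.1) (q.1.1, q.2.1) *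
    (if p.1.2 = q.1.2 then (1 : ℂ) else 0) * (if p.2.2 = q.2.2 then (1 : ℂ) else 0)

/-- Partial trace over `S̄' = γ × δ`. -/
noncomputable def ptrSbar (M : Matrix ((α × β) × (γ × δ)) ((α × β) × (γ × δ)) ℂ) :
    Matrix (α × β) (α × β) ℂ :=
  fun i j => ∑ k : γ × δ, M (i, k) (j, k)

/-- Partial trace over `S̄' ∪ S_h`, i.e. over `(γ × δ)` and `α`. -/
noncomputable def ptrSbarCupSh (M : Matrix ((α × β) × (γ × δ)) ((α × β) × (γ × δ)) ℂ) :
    Matrix β β ℂ :=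
  fun i j => ∑ a : α, ∑ k : γ × δ, M ((a, i), k) ((a, j), k)

/-- Partial trace over `S̄' / S_h̄`, i.e. over `δ` only. -/
noncomputable def ptrSbarDiffShbar (M : Matrix ((α × β) × (γ × δ)) ((α × β) × (γ × δ)) ℂ) :
    Matrix ((α × β) × γ) ((α × β) × γ) ℂ :=
  fun p q => ∑ e : δ, M (p.1, (p.2, e)) (q.1, (q.2, e))

end

section HaarAux
open scoped Kronecker

variable {I : Type*} [Fintype I] [DecidableEq I]

lemma commutant_entries (f : I → I → I → I → ℂ)
    (h : ∀ a b i j k l, (if b = k then f i j a l else 0) + (if b = l then f i j k a else 0)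
      = (if i = a then f b j k l else 0) + (if j = a then f i b k l else 0)) :
    ∃ p q : ℂ, ∀ i j k l, f i j k l = (if i = k ∧ j = l then p else 0)
      + (if i = l ∧ j = k then q else 0) := by
  have zero : ∀ i j k l, ¬ (i = k ∧ j = l) → ¬ (i = l ∧ j = k) → f i j k l = 0 := by
    intro i j k l h1 h2
    by_contra hne
    have e : ∀ a, ((if a = k then 1 else 0) + (if a = l then 1 else 0) : ℕ)
        = (if i = a then 1 else 0) + (if j = a then 1 else 0) := by
      intro a
      have h0 := h a a i j k l
      have h3 : ((if a = k then 1 else 0) + (if a = l then 1 else 0) : ℂ) * f i j k l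
          = ((if i = a then 1 else 0) + (if j = a then 1 else 0)) * f i j k l := by
        calc _ = _ := ?_
          _ = _ := h0
          _ = _ := ?_
        · rw [add_mul]; congr 1 <;> split_ifs with hh <;> (try subst hh) <;> simp
        · rw [add_mul]; congr 1 <;> split_ifs with hh <;> simp [hh]
      exact_mod_cast mul_right_cancel₀ hne h3
    have ei := e i
    have ej := e j
    clear e h
    grind
  have p1 : ∀ i j b, i ≠ j → b ≠ j → f i j i j = f b j b j := by
    intro i j b hij hb
    by_cases hbi : b = i
    · rw [hbi]
    have := h i b i j b j
    simpa [hij.symm, hb] using this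
  have p2 : ∀ i j b, i ≠ j → b ≠ i → f i j i j = f i b i b := by
    intro i j b hij hb
    have := h j b i j i b
    simpa [hij, hb] using this
  have q1 : ∀ i j b, i ≠ j → b ≠ j → f i j j i = f b j j b := by
    intro i j b hij hb
    have := h i b i j j b
    simpa [hij.symm, hb] using this
  have q2 : ∀ i j b, i ≠ j → b ≠ i → f i j j i = f i b b i := by
    intro i j b hij hb
    have := h j b i j b i
    simpa [hij, hb] using this
  have r1 : ∀ x y, x ≠ y → f x x x x = f x y x y + f x y y x := by
    intro x y hxy
    have := h y x x y x x
    simp [hxy] at this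
    rw [← this]; ring
  have r2 : ∀ x y, x ≠ y → f x x x x = f y x y x + f x y y x := by
    intro x y hxy
    have := h x y x x y x
    simpa [hxy.symm] using this
  have r3 : ∀ x y, x ≠ y → f x x x x = f y x x y + f x y x y := by
    intro x y hxy
    have := h x y x x x y
    simpa [hxy.symm] using this
  have p3 : ∀ x y, x ≠ y → f x y x y = f y x y x := by
    intro x y hxy
    have := r1 x y hxy; have := r2 x y hxy; grind
  have q3 : ∀ x y, x ≠ y → f x y y x = f y x x y := by
    intro x y hxy
    have := r1 x y hxy; have := r3 x y hxy; grind
  by_cases hs : ∃ x y : I, x ≠ y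
  · obtain ⟨x, y, hxy⟩ := hs
    have P : ∀ i j, i ≠ j → f i j i j = f x y x y := by
      intro i j hij
      by_cases hj : x = j
      · subst hj
        rw [p3 _ _ hij]
        exact p2 _ _ _ hij.symm hxy.symm
      · rw [p1 i j x hij hj]
        exact p2 _ _ _ hj hxy.symm
    have Q : ∀ i j, i ≠ j → f i j j i = f x y y x := by
      intro i j hij
      by_cases hj : x = j
      · subst hj
        rw [q3 _ _ hij]
        exact q2 _ _ _ hij.symm hxy.symm
      · rw [q1 i j x hij hj]
        exact q2 _ _ _ hj hxy.symm
    have R : ∀ i, f i i i i = f x y x y + f x y y x := by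
      intro i
      obtain ⟨z, hz⟩ : ∃ z, i ≠ z := by
        by_cases hi : i = x
        · exact ⟨y, hi ▸ hxy⟩
        · exact ⟨x, hi⟩
      rw [r1 i z hz, P _ _ hz, Q _ _ hz]
    refine ⟨f x y x y, f x y y x, fun i j k l => ?_⟩
    by_cases c1 : i = k ∧ j = l
    · obtain ⟨rfl, rfl⟩ := c1
      by_cases hij : i = j
      · subst hij; simp [R]
      · simp [hij, P i j hij]
    · by_cases c2 : i = l ∧ j = k
      · obtain ⟨rfl, rfl⟩ := c2
        have hij : i ≠ j := fun h => c1 ⟨h, h.symm⟩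
        simp [hij, Q i j hij]
      · simp [c1, c2, zero i j k l c1 c2]
  · push Not at hs
    rcases isEmpty_or_nonempty I with hI | ⟨⟨x⟩⟩
    · exact ⟨0, 0, fun i => hI.elim i⟩
    · refine ⟨f x x x x, 0, fun i j k l => ?_⟩
      rw [hs i x, hs j x, hs k x, hs l x]; simp

/-- The swap operator. -/
def swapMat (I : Type*) [DecidableEq I] : Matrix (I × I) (I × I) ℂ :=
  fun p q => if p.1 = q.2 ∧ p.2 = q.1 then 1 else 0

lemma commutant_form (T : Matrix (I × I) (I × I) ℂ)
    (h : ∀ M : Matrix I I ℂ, T * (M ⊗ₖ 1 + 1 ⊗ₖ M) = (M ⊗ₖ 1 + 1 ⊗ₖ M) * T) :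
    ∃ p q : ℂ, T = p • 1 + q • swapMat I := by
  obtain ⟨p, q, hpq⟩ := commutant_entries (fun i j k l => T (i, j) (k, l)) (by
    intro a b i j k l
    have := congrFun (congrFun (h (Matrix.single a b 1)) (i, j)) (k, l)
    simp only [Matrix.mul_apply, Matrix.add_apply, Matrix.kroneckerMap_apply,
      Fintype.sum_prod_type, Matrix.single_apply, Matrix.one_apply] at this
    simp only [mul_add, add_mul, Finset.sum_add_distrib, mul_ite, ite_mul, mul_one, mul_zero,
      one_mul, zero_mul, ite_and, Finset.sum_ite_eq, Finset.sum_ite_eq', Finset.mem_univ, if_true,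
      Finset.sum_ite_irrel, Finset.sum_const_zero] at this
    simpa [eq_comm] using this)
  refine ⟨p, q, ?_⟩
  ext ⟨i, j⟩ ⟨k, l⟩
  simp [hpq i j k l, swapMat, Matrix.one_apply, Prod.ext_iff]

lemma commute_proj (T : Matrix (I × I) (I × I) ℂ)
    (h : ∀ U ∈ Matrix.unitaryGroup I ℂ, T * (U ⊗ₖ U) = (U ⊗ₖ U) * T)
    (P : Matrix I I ℂ) (hP : P * P = P) (hP' : star P = P) :
    T * (P ⊗ₖ 1 + 1 ⊗ₖ P) = (P ⊗ₖ 1 + 1 ⊗ₖ P) * T := by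
  have key : ∀ t : ℂ, t + star t + t * star t = 0 →
      T * (t • (P ⊗ₖ 1 + 1 ⊗ₖ P) + t ^ 2 • (P ⊗ₖ P))
        = (t • (P ⊗ₖ 1 + 1 ⊗ₖ P) + t ^ 2 • (P ⊗ₖ P)) * T := by
    intro t ht
    have hU : (1 + t • P) ∈ Matrix.unitaryGroup I ℂ := by
      rw [Matrix.mem_unitaryGroup_iff]
      rw [star_add, star_smul, hP', star_one]
      have : (1 + t • P) * (1 + star t • P) = 1 + (t + star t + t * star t) • P := by
        simp only [mul_add, add_mul, one_mul, mul_one, smul_mul_assoc, mul_smul_comm, hP,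
          add_smul]
        module
      rw [this, ht]; simp
    have := h _ hU
    have e : (1 + t • P) ⊗ₖ (1 + t • P) = (1 : Matrix (I × I) (I × I) ℂ) +
        (t • (P ⊗ₖ 1 + 1 ⊗ₖ P) + t ^ 2 • (P ⊗ₖ P)) := by
      simp only [Matrix.add_kronecker, Matrix.kronecker_add, Matrix.smul_kronecker,
        Matrix.kronecker_smul, Matrix.one_kronecker_one, smul_add, smul_smul, pow_two]
      abel
    rw [e, mul_add, add_mul, mul_one, one_mul] at this
    exact add_left_cancel this
  have k1 := key (-2) (by norm_num)
  have k2 := key (Complex.I - 1) (by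
    apply Complex.ext <;> simp <;> norm_num)
  generalize P ⊗ₖ 1 + 1 ⊗ₖ P = L at *
  generalize P ⊗ₖ P = Q at *
  have hI : (Complex.I - 1) ^ 2 = -2 * Complex.I := by
    ring_nf; simp; ring
  rw [hI] at k2
  simp only [mul_add, add_mul, smul_mul_assoc, mul_smul_comm] at k1 k2
  have e1 : T * L = -((Complex.I / 2) • ((-2 : ℂ) • (T * L) + (-2 : ℂ) ^ 2 • (T * Q)) +
      ((Complex.I - 1) • (T * L) + (-2 * Complex.I) • (T * Q))) := by
    module
  have e2 : L * T = -((Complex.I / 2) • ((-2 : ℂ) • (L * T) + (-2 : ℂ) ^ 2 • (Q * T)) +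
      ((Complex.I - 1) • (L * T) + (-2 * Complex.I) • (Q * T))) := by
    module
  rw [e1, e2, k1, k2]

lemma commute_all (T : Matrix (I × I) (I × I) ℂ)
    (h : ∀ U ∈ Matrix.unitaryGroup I ℂ, T * (U ⊗ₖ U) = (U ⊗ₖ U) * T)
    (M : Matrix I I ℂ) :
    T * (M ⊗ₖ 1 + 1 ⊗ₖ M) = (M ⊗ₖ 1 + 1 ⊗ₖ M) * T := by
  have hp := commute_proj T h
  have add : ∀ M N : Matrix I I ℂ, T * (M ⊗ₖ 1 + 1 ⊗ₖ M) = (M ⊗ₖ 1 + 1 ⊗ₖ M) * T →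
      T * (N ⊗ₖ 1 + 1 ⊗ₖ N) = (N ⊗ₖ 1 + 1 ⊗ₖ N) * T →
      T * ((M + N) ⊗ₖ 1 + 1 ⊗ₖ (M + N)) = ((M + N) ⊗ₖ 1 + 1 ⊗ₖ (M + N)) * T := by
    intro M N h1 h2
    have e : (M + N) ⊗ₖ (1 : Matrix I I ℂ) + (1 : Matrix I I ℂ) ⊗ₖ (M + N) =
      (M ⊗ₖ 1 + 1 ⊗ₖ M) + (N ⊗ₖ 1 + 1 ⊗ₖ N) := by
      simp only [Matrix.add_kronecker, Matrix.kronecker_add]; abel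
    rw [e, mul_add, add_mul, h1, h2]
  have smul : ∀ (c : ℂ) (M : Matrix I I ℂ), T * (M ⊗ₖ 1 + 1 ⊗ₖ M) = (M ⊗ₖ 1 + 1 ⊗ₖ M) * T →
      T * ((c • M) ⊗ₖ 1 + 1 ⊗ₖ (c • M)) = ((c • M) ⊗ₖ 1 + 1 ⊗ₖ (c • M)) * T := by
    intro c M h1
    simp only [Matrix.smul_kronecker, Matrix.kronecker_smul, ← smul_add, smul_mul_assoc,
      mul_smul_comm, h1]
  have diag : ∀ a : I, T * (Matrix.single a a 1 ⊗ₖ 1 + 1 ⊗ₖ Matrix.single a a 1) =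
      (Matrix.single a a 1 ⊗ₖ 1 + 1 ⊗ₖ Matrix.single a a 1) * T := by
    intro a
    apply hp
    · simp
    · simp [Matrix.star_eq_conjTranspose]
  have off : ∀ (a b : I) (_ : a ≠ b) (w : ℂ) (_ : w * star w = 1),
      T * (((1 / 2 : ℂ) • (Matrix.single a a 1 + Matrix.single b b 1 + star w • Matrix.single a b 1
        + w • Matrix.single b a 1)) ⊗ₖ 1 + 1 ⊗ₖ ((1 / 2 : ℂ) • (Matrix.single a a 1 +
        Matrix.single b b 1 + star w • Matrix.single a b 1 + w • Matrix.single b a 1))) =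
      (((1 / 2 : ℂ) • (Matrix.single a a 1 + Matrix.single b b 1 + star w • Matrix.single a b 1
        + w • Matrix.single b a 1)) ⊗ₖ 1 + 1 ⊗ₖ ((1 / 2 : ℂ) • (Matrix.single a a 1 +
        Matrix.single b b 1 + star w • Matrix.single a b 1 + w • Matrix.single b a 1))) * T := by
    intro a b hab w hw
    have hw' : star w * w = 1 := by rw [mul_comm]; exact hw
    apply hp
    · simp only [smul_mul_assoc, mul_smul_comm, add_mul, mul_add, Matrix.single_mul_single_same,
        mul_one, Matrix.single_mul_single_of_ne _ _ _ _ hab,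
        Matrix.single_mul_single_of_ne _ _ _ _ hab.symm, smul_add, smul_smul, smul_zero]
      match_scalars <;> first | ring1 | linear_combination (1 / 4 : ℂ) * hw
    · simp only [star_smul, star_add, Matrix.star_eq_conjTranspose, Matrix.conjTranspose_single,
        star_one, star_star]
      congr 1
      · simp
      · abel
  have sing : ∀ a b : I, T * (Matrix.single a b 1 ⊗ₖ 1 + 1 ⊗ₖ Matrix.single a b 1) =
      (Matrix.single a b 1 ⊗ₖ 1 + 1 ⊗ₖ Matrix.single a b 1) * T := by
    intro a b
    by_cases hab : a = b
    · subst hab; exact diag a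
    have o1 := off a b hab 1 (by simp)
    have o2 := off a b hab Complex.I (by simp)
    have e : (Matrix.single a b 1 : Matrix I I ℂ) =
      (1 : ℂ) • ((1 / 2 : ℂ) • (Matrix.single a a 1 + Matrix.single b b 1 + star (1 : ℂ) •
        Matrix.single a b 1 + (1 : ℂ) • Matrix.single b a 1)) +
      (Complex.I • ((1 / 2 : ℂ) • (Matrix.single a a 1 + Matrix.single b b 1 + star Complex.I •
        Matrix.single a b 1 + Complex.I • Matrix.single b a 1)) +
      (-(1 + Complex.I) / 2) • (Matrix.single a a 1 + Matrix.single b b 1)) := by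
      have hI : star Complex.I = - Complex.I := by simp
      rw [hI, star_one]
      have : Complex.I * Complex.I = -1 := Complex.I_mul_I
      match_scalars <;> first | ring1 | linear_combination (1 / 2 : ℂ) * this | linear_combination (-1 / 2 : ℂ) * this
    rw [e]
    exact add _ _ (smul _ _ o1) (add _ _ (smul _ _ o2) (smul _ _ (add _ _ (diag a) (diag b))))
  rw [Matrix.matrix_eq_sum_single M]
  refine Finset.sum_induction _ (fun M => T * (M ⊗ₖ 1 + 1 ⊗ₖ M) = (M ⊗ₖ 1 + 1 ⊗ₖ M) * T)
    add (by simp) (fun a _ => ?_)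
  refine Finset.sum_induction _ (fun M => T * (M ⊗ₖ 1 + 1 ⊗ₖ M) = (M ⊗ₖ 1 + 1 ⊗ₖ M) * T)
    add (by simp) (fun b _ => ?_)
  have := smul (M a b) _ (sing a b)
  rwa [Matrix.smul_single, smul_eq_mul, mul_one] at this

end HaarAux

section HaarMeas
variable {I : Type*} [Fintype I] [DecidableEq I]

lemma unitary_compact : CompactSpace (Matrix.unitaryGroup I ℂ) := by
  let : NormedAddCommGroup (Matrix I I ℂ) := Matrix.normedAddCommGroup
  have : ProperSpace (Matrix I I ℂ) := inferInstanceAs (ProperSpace (I → I → ℂ))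
  apply isCompact_iff_compactSpace.mp
  apply Metric.isCompact_of_isClosed_isBounded
  · have : ((Matrix.unitaryGroup I ℂ : Submonoid (Matrix I I ℂ)) : Set (Matrix I I ℂ)) = {U | U * star U = 1} := by
      ext U; exact Matrix.mem_unitaryGroup_iff
    rw [this]
    exact isClosed_eq (by fun_prop) continuous_const
  · rw [isBounded_iff_forall_norm_le]
    exact ⟨1, fun U hU => entrywise_sup_norm_bound_of_unitary hU⟩

lemma haar_right [MeasurableSpace (Matrix.unitaryGroup I ℂ)]
    [BorelSpace (Matrix.unitaryGroup I ℂ)]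
    (μ : Measure (Matrix.unitaryGroup I ℂ))
    [μ.IsHaarMeasure] [IsProbabilityMeasure μ] : μ.IsMulRightInvariant := by
  have := unitary_compact (I := I)
  constructor
  intro g
  have : IsProbabilityMeasure (μ.map (· * g)) :=
    Measure.isProbabilityMeasure_map (by fun_prop)
  exact Measure.isHaarMeasure_eq_of_isProbabilityMeasure _ _

end HaarMeas

section HaarMain
open scoped Kronecker
variable {I : Type*} [Fintype I] [DecidableEq I]


lemma swapMat_mul (M : Matrix (I × I) (I × I) ℂ) (p q : I × I) :
    (swapMat I * M) p q = M p.swap q := by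
  rw [Matrix.mul_apply, Fintype.sum_eq_single p.swap]
  · simp [swapMat]
  · rintro ⟨x, y⟩ hxy
    have : ¬ (p.1 = y ∧ p.2 = x) := by
      rintro ⟨h1, h2⟩; apply hxy; simp [Prod.ext_iff, h1, h2]
    simp [swapMat, this]

lemma mul_swapMat (M : Matrix (I × I) (I × I) ℂ) (p q : I × I) :
    (M * swapMat I) p q = M p q.swap := by
  rw [Matrix.mul_apply, Fintype.sum_eq_single q.swap]
  · simp [swapMat]
  · rintro ⟨x, y⟩ hxy
    have : ¬ (x = q.2 ∧ y = q.1) := by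
      rintro ⟨h1, h2⟩; apply hxy; simp [Prod.ext_iff, h1, h2]
    simp [swapMat, this]

lemma swapMat_comm (U : Matrix I I ℂ) : swapMat I * (U ⊗ₖ U) = (U ⊗ₖ U) * swapMat I := by
  ext p q
  rw [swapMat_mul, mul_swapMat]
  simp [mul_comm]

/-- Conjugation by `W ⊗ W`. -/
noncomputable def conjTwo (X : Matrix (I × I) (I × I) ℂ) (W : Matrix.unitaryGroup I ℂ) :
    Matrix (I × I) (I × I) ℂ :=
  (star (W : Matrix I I ℂ) ⊗ₖ star (W : Matrix I I ℂ)) * X * ((W : Matrix I I ℂ) ⊗ₖ (W : Matrix I I ℂ))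

lemma conjTwo_cont (X : Matrix (I × I) (I × I) ℂ) : Continuous (conjTwo X) := by
  have h1 : Continuous fun W : Matrix.unitaryGroup I ℂ => (W : Matrix I I ℂ) ⊗ₖ (W : Matrix I I ℂ) := by
    refine continuous_matrix fun p q => ?_
    simp only [Matrix.kroneckerMap_apply]
    exact (continuous_subtype_val.matrix_elem _ _).mul (continuous_subtype_val.matrix_elem _ _)
  have h2 : Continuous fun W : Matrix.unitaryGroup I ℂ =>
      star (W : Matrix I I ℂ) ⊗ₖ star (W : Matrix I I ℂ) := by
    have h3 : Continuous fun W : Matrix.unitaryGroup I ℂ => star (W : Matrix I I ℂ) :=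
      continuous_subtype_val.star
    refine continuous_matrix fun p q => ?_
    simp only [Matrix.kroneckerMap_apply]
    exact (h3.matrix_elem _ _).mul (h3.matrix_elem _ _)
  exact (h2.mul continuous_const).mul h1

lemma kron_unitary (U : Matrix.unitaryGroup I ℂ) :
    ((U : Matrix I I ℂ) ⊗ₖ (U : Matrix I I ℂ)) *
      (star (U : Matrix I I ℂ) ⊗ₖ star (U : Matrix I I ℂ)) = 1 := by
  rw [← Matrix.mul_kronecker_mul, Matrix.mem_unitaryGroup_iff.mp U.2, Matrix.one_kronecker_one]

lemma conjTwo_mul (X : Matrix (I × I) (I × I) ℂ) (W U : Matrix.unitaryGroup I ℂ) :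
    conjTwo X (W * U) = (star (U : Matrix I I ℂ) ⊗ₖ star (U : Matrix I I ℂ)) * conjTwo X W *
      ((U : Matrix I I ℂ) ⊗ₖ (U : Matrix I I ℂ)) := by
  simp only [conjTwo, Submonoid.coe_mul, star_mul, Matrix.mul_kronecker_mul, mul_assoc]

/-- The entrywise Haar integral of `conjTwo X`. -/
noncomputable def haarT [MeasurableSpace (Matrix.unitaryGroup I ℂ)]
    (μ : Measure (Matrix.unitaryGroup I ℂ)) (X : Matrix (I × I) (I × I) ℂ) :
    Matrix (I × I) (I × I) ℂ :=
  fun p q => ∫ W, conjTwo X W p q ∂μ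

/-- A linear functional passes through the Haar integral. -/
lemma haar_functional [MeasurableSpace (Matrix.unitaryGroup I ℂ)]
    [BorelSpace (Matrix.unitaryGroup I ℂ)]
    (μ : Measure (Matrix.unitaryGroup I ℂ)) [IsProbabilityMeasure μ]
    (X : Matrix (I × I) (I × I) ℂ) (φ : Matrix (I × I) (I × I) ℂ →ₗ[ℂ] ℂ) :
    ∫ W, φ (conjTwo X W) ∂μ = φ (haarT μ X) := by
  have hcpt := unitary_compact (I := I)
  have hint : ∀ p q, Integrable (fun W => conjTwo X W p q) μ := fun p q =>
    ((conjTwo_cont X).matrix_elem p q).integrable_of_hasCompactSupport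
      (HasCompactSupport.of_compactSpace _)
  have hφ : ∀ M : Matrix (I × I) (I × I) ℂ,
      φ M = ∑ p, ∑ q, M p q * φ (Matrix.single p q 1) := by
    intro M
    conv_lhs => rw [Matrix.matrix_eq_sum_single M]
    simp only [map_sum]
    refine Finset.sum_congr rfl fun p _ => Finset.sum_congr rfl fun q _ => ?_
    rw [← smul_eq_mul, ← map_smul, Matrix.smul_single, smul_eq_mul, mul_one]
  rw [hφ (haarT μ X)]
  simp only [fun W => hφ (conjTwo X W)]
  rw [integral_finset_sum _ fun p _ => integrable_finset_sum _ fun q _ => (hint p q).mul_const _]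
  refine Finset.sum_congr rfl fun p _ => ?_
  rw [integral_finset_sum _ fun q _ => (hint p q).mul_const _]
  refine Finset.sum_congr rfl fun q _ => ?_
  rw [integral_mul_const]
  rfl

lemma haar_twirl [MeasurableSpace (Matrix.unitaryGroup I ℂ)]
    [BorelSpace (Matrix.unitaryGroup I ℂ)]
    (μ : Measure (Matrix.unitaryGroup I ℂ)) [μ.IsHaarMeasure] [IsProbabilityMeasure μ]
    (X : Matrix (I × I) (I × I) ℂ) :
    ∃ p q : ℂ, haarT μ X = p • 1 + q • swapMat I := by
  apply commutant_form
  apply commute_all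
  intro U hU
  have := haar_right μ
  have inv : (star U ⊗ₖ star U) * haarT μ X * (U ⊗ₖ U) = haarT μ X := by
    ext p q
    have inv := integral_mul_right_eq_self (μ := μ) (fun W => conjTwo X W p q) ⟨U, hU⟩
    simp only [conjTwo_mul] at inv
    have hc := haar_functional μ X ((Matrix.entryLinearMap ℂ ℂ p q) ∘ₗ
      (LinearMap.mulRight ℂ (U ⊗ₖ U)) ∘ₗ (LinearMap.mulLeft ℂ (star U ⊗ₖ star U)))
    simp only [LinearMap.comp_apply, LinearMap.mulLeft_apply, LinearMap.mulRight_apply,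
      Matrix.entryLinearMap_apply] at hc
    rw [← hc, inv]
    rfl
  set T := haarT μ X
  have hk := kron_unitary ⟨U, hU⟩
  simp only at hk
  calc T * (U ⊗ₖ U) = ((U ⊗ₖ U) * (star U ⊗ₖ star U)) * T * (U ⊗ₖ U) := by rw [hk, one_mul]
    _ = (U ⊗ₖ U) * ((star U ⊗ₖ star U) * T * (U ⊗ₖ U)) := by simp only [mul_assoc]
    _ = _ := by rw [inv]

/-- Second-moment formula for an operator with equal traces against `1` and swap. -/
lemma haar_second_moment [MeasurableSpace (Matrix.unitaryGroup I ℂ)]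
    [BorelSpace (Matrix.unitaryGroup I ℂ)]
    (μ : Measure (Matrix.unitaryGroup I ℂ)) [μ.IsHaarMeasure] [IsProbabilityMeasure μ]
    (X : Matrix (I × I) (I × I) ℂ) (t : ℂ) (hX : X.trace = t)
    (hSX : (swapMat I * X).trace = t) (hI : 0 < Fintype.card I)
    (φ : Matrix (I × I) (I × I) ℂ →ₗ[ℂ] ℂ) :
    ∫ W, φ (conjTwo X W) ∂μ =
      t / ((Fintype.card I : ℂ) * ((Fintype.card I : ℂ) + 1)) * (φ 1 + φ (swapMat I)) := by
  obtain ⟨p, q, hT⟩ := haar_twirl μ X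
  set d : ℂ := (Fintype.card I : ℂ) with hd
  have hd0 : d ≠ 0 := by simp [hd, hI.ne']
  have hd1 : d + 1 ≠ 0 := by rw [hd]; exact_mod_cast Nat.succ_ne_zero (Fintype.card I)
  have tr1 : (1 : Matrix (I × I) (I × I) ℂ).trace = d ^ 2 := by
    simp [Matrix.trace_one, hd, pow_two]
  have trS : (swapMat I).trace = d := by
    simp only [Matrix.trace, Matrix.diag, swapMat, Fintype.sum_prod_type]
    simp [hd, eq_comm]
  have SS : swapMat I * swapMat I = 1 := by
    ext p q
    rw [swapMat_mul]
    simp [swapMat, Matrix.one_apply, Prod.ext_iff, and_comm]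
  have e1 : p * d ^ 2 + q * d = t := by
    have := haar_functional μ X (Matrix.traceLinearMap (I × I) ℂ ℂ)
    rw [hT] at this
    simp only [Matrix.traceLinearMap_apply, Matrix.trace_add, Matrix.trace_smul, tr1, trS,
      smul_eq_mul] at this
    rw [← this]
    have hc : ∀ W : Matrix.unitaryGroup I ℂ, (conjTwo X W).trace = t := by
      intro W
      rw [conjTwo, Matrix.trace_mul_comm, ← mul_assoc, kron_unitary, one_mul, hX]
    simp [hc]
  have e2 : p * d + q * d ^ 2 = t := by
    have := haar_functional μ X ((Matrix.traceLinearMap (I × I) ℂ ℂ) ∘ₗ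
      LinearMap.mulLeft ℂ (swapMat I))
    rw [hT] at this
    simp only [LinearMap.comp_apply, LinearMap.mulLeft_apply, Matrix.traceLinearMap_apply,
      mul_add, mul_smul_comm, mul_one, SS, Matrix.trace_add, Matrix.trace_smul, tr1, trS,
      smul_eq_mul] at this
    rw [← this]
    have hc : ∀ W : Matrix.unitaryGroup I ℂ, (swapMat I * conjTwo X W).trace = t := by
      intro W
      rw [conjTwo, ← mul_assoc, ← mul_assoc, swapMat_comm, Matrix.trace_mul_comm, ← mul_assoc,
        ← mul_assoc, kron_unitary, one_mul, hSX]
    simp [hc]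
  rw [haar_functional, hT, map_add, map_smul, map_smul, smul_eq_mul, smul_eq_mul]
  by_cases hd1' : d = 1
  · have hc : Fintype.card I = 1 := by rw [hd] at hd1'; exact_mod_cast hd1'
    have hss : Subsingleton I := Fintype.card_le_one_iff_subsingleton.mp hc.le
    have hS1 : swapMat I = 1 := by
      ext p q
      have : p = q := Subsingleton.elim _ _
      subst this
      simp [swapMat, Subsingleton.elim p.1 p.2]
    rw [hS1, ← e1, hd1']; ring
  · have hpq : p = q := by
      have : (p - q) * (d * (d - 1)) = 0 := by linear_combination e1 - e2
      rcases mul_eq_zero.mp this with h | h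
      · exact sub_eq_zero.mp h
      · exact absurd h (mul_ne_zero hd0 (sub_ne_zero.mpr hd1'))
    subst hpq
    rw [← e1]; field_simp

end HaarMain

section HaarFinal
open scoped Kronecker
variable {α β γ δ : Type*} [Fintype α] [DecidableEq α] [Fintype β] [DecidableEq β]
    [Fintype γ] [DecidableEq γ] [Fintype δ] [DecidableEq δ]

/-- Swap on the `α` factor only. -/
def swapLeft (α γ : Type*) [DecidableEq α] [DecidableEq γ] :
    Matrix ((α × γ) × (α × γ)) ((α × γ) × (α × γ)) ℂ :=
  fun p q => if p.1.1 = q.2.1 ∧ p.2.1 = q.1.1 ∧ p.1.2 = q.1.2 ∧ p.2.2 = q.2.2 then 1 else 0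

lemma trace_swapLeft : (swapLeft α γ).trace =
    (Fintype.card α : ℂ) * (Fintype.card γ : ℂ) ^ 2 := by
  simp only [Matrix.trace, Matrix.diag, swapLeft, Fintype.sum_prod_type, and_true]
  have : ∀ x y : α, (x = y ∧ y = x) ↔ x = y := fun x y => ⟨fun h => h.1, fun h => ⟨h, h.symm⟩⟩
  simp only [this, Finset.sum_const, Finset.sum_ite_irrel, Finset.sum_ite_eq, Finset.mem_univ,
    if_true, Finset.card_univ, nsmul_eq_mul, mul_one, smul_zero, mul_zero]
  simp [Finset.sum_const, Finset.card_univ, pow_two]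

lemma trace_swap_swapLeft : (swapMat (α × γ) * swapLeft α γ).trace =
    (Fintype.card α : ℂ) ^ 2 * (Fintype.card γ : ℂ) := by
  simp only [Matrix.trace, Matrix.diag, swapMat_mul, swapLeft, Fintype.sum_prod_type, Prod.swap,
    true_and]
  have : ∀ x y : γ, (y = x ∧ x = y) ↔ x = y := fun x y => ⟨fun h => h.2, fun h => ⟨h.symm, h⟩⟩
  simp only [this]
  simp
  ring

lemma trace_swap_kron {I : Type*} [Fintype I] [DecidableEq I] (B C : Matrix I I ℂ) :
    (swapMat I * (B ⊗ₖ C)).trace = (B * C).trace := by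
  simp only [Matrix.trace, Matrix.diag, swapMat_mul, Fintype.sum_prod_type, Prod.swap,
    Matrix.kroneckerMap_apply]
  simp only [Matrix.mul_apply]
  exact Finset.sum_comm

lemma trace_swapLeft_kron (B C : Matrix (α × γ) (α × γ) ℂ) :
    (swapLeft α γ * (B ⊗ₖ C)).trace =
      ∑ a : α, ∑ a' : α, (∑ c : γ, B (a, c) (a', c)) * ∑ c : γ, C (a', c) (a, c) := by
  simp only [Matrix.trace, Matrix.diag, swapLeft, Fintype.sum_prod_type,
    Matrix.kroneckerMap_apply, Matrix.mul_apply, ite_and, ite_mul, one_mul, zero_mul,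
    Finset.sum_ite_irrel, Finset.sum_const_zero, Finset.sum_ite_eq, Finset.mem_univ, if_true]
  simp only [Finset.sum_mul_sum]
  conv_rhs => rw [Finset.sum_comm]
  refine Finset.sum_congr rfl fun a _ => ?_
  rw [Finset.sum_comm]

/-- The block of `A` between `b` and `b'`, traced over `δ`. -/
noncomputable def blk (A : Matrix ((α × β) × (γ × δ)) ((α × β) × (γ × δ)) ℂ) (b b' : β) :
    Matrix (α × γ) (α × γ) ℂ :=
  fun p q => ∑ e : δ, A ((p.1, b), (p.2, e)) ((q.1, b'), (q.2, e))

lemma embed_mul_apply (W : Matrix (α × γ) (α × γ) ℂ)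
    (A : Matrix ((α × β) × (γ × δ)) ((α × β) × (γ × δ)) ℂ) (a b c e q) :
    (embedStraddle W * A : Matrix ((α × β) × (γ × δ)) ((α × β) × (γ × δ)) ℂ) ((a, b), (c, e)) q =
      ∑ x : α × γ, W (a, c) x * A ((x.1, b), (x.2, e)) q := by
  simp only [Matrix.mul_apply, embedStraddle, Fintype.sum_prod_type, mul_ite, ite_mul, mul_one,
    mul_zero, zero_mul, Finset.sum_ite_eq, Finset.mem_univ, if_true, Finset.sum_ite_irrel,
    Finset.sum_const_zero]

lemma mul_embed_apply (W : Matrix (α × γ) (α × γ) ℂ)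
    (A : Matrix ((α × β) × (γ × δ)) ((α × β) × (γ × δ)) ℂ) (a b c e q) :
    (A * star (embedStraddle W) : Matrix ((α × β) × (γ × δ)) ((α × β) × (γ × δ)) ℂ) q ((a, b), (c, e)) =
      ∑ x : α × γ, A q ((x.1, b), (x.2, e)) * star W x (a, c) := by
  simp only [Matrix.mul_apply, Matrix.star_apply, embedStraddle, Fintype.sum_prod_type, star_mul',
    apply_ite star, star_one, star_zero, mul_ite, ite_mul, mul_one,
    mul_zero, zero_mul, Finset.sum_ite_eq, Finset.mem_univ, if_true, Finset.sum_ite_irrel,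
    Finset.sum_const_zero]

lemma blk_conj (W : Matrix (α × γ) (α × γ) ℂ)
    (A : Matrix ((α × β) × (γ × δ)) ((α × β) × (γ × δ)) ℂ) (b b' : β) :
    blk (embedStraddle W * A * star (embedStraddle W)) b b' = W * blk A b b' * star W := by
  ext p q
  simp only [blk, mul_embed_apply, embed_mul_apply]
  rw [Matrix.mul_apply]
  simp only [Matrix.mul_apply, blk]
  rw [Finset.sum_comm]
  refine Finset.sum_congr rfl fun x _ => ?_
  rw [← Finset.sum_mul, Finset.sum_comm]
  simp only [Finset.mul_sum]

lemma purity_eq (M : Matrix ((α × β) × (γ × δ)) ((α × β) × (γ × δ)) ℂ) :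
    (ptrSbar M * ptrSbar M).trace =
      ∑ b : β, ∑ b' : β, (swapLeft α γ * (blk M b b' ⊗ₖ blk M b' b)).trace := by
  simp only [trace_swapLeft_kron, blk]
  simp only [Matrix.trace, Matrix.diag, Matrix.mul_apply, ptrSbar, Fintype.sum_prod_type]
  rw [Finset.sum_comm]
  refine Finset.sum_congr rfl fun b _ => ?_
  rw [Finset.sum_comm (s := (Finset.univ : Finset β))]
  refine Finset.sum_congr rfl fun a _ => ?_
  rw [Finset.sum_comm]

lemma cup_eq (A : Matrix ((α × β) × (γ × δ)) ((α × β) × (γ × δ)) ℂ) :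
    (ptrSbarCupSh A * ptrSbarCupSh A).trace =
      ∑ b : β, ∑ b' : β, (blk A b b').trace * (blk A b' b).trace := by
  simp only [Matrix.trace, Matrix.diag, Matrix.mul_apply, ptrSbarCupSh, blk,
    Fintype.sum_prod_type]

lemma diff_eq (A : Matrix ((α × β) × (γ × δ)) ((α × β) × (γ × δ)) ℂ) :
    (ptrSbarDiffShbar A * ptrSbarDiffShbar A).trace =
      ∑ b : β, ∑ b' : β, (blk A b b' * blk A b' b).trace := by
  have : ∀ p q : (α × β) × γ, ptrSbarDiffShbar A p q = blk A p.1.2 q.1.2 (p.1.1, p.2) (q.1.1, q.2) :=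
    fun _ _ => rfl
  simp only [Matrix.trace, Matrix.diag, Matrix.mul_apply, this, Fintype.sum_prod_type]
  rw [Finset.sum_comm]
  refine Finset.sum_congr rfl fun b _ => ?_
  conv_rhs => rw [Finset.sum_comm]
  refine Finset.sum_congr rfl fun x _ => ?_
  conv_rhs => rw [Finset.sum_comm]
  refine Finset.sum_congr rfl fun y _ => ?_
  conv_rhs => rw [Finset.sum_comm]

end HaarFinal

/-- Let `W` be Haar-random on the `d`-dimensional factor
`S_s = S_h ⊗ S_h̄` (with `S_h ⊂ S'`, `S_h̄ ⊂ S̄'`, each of dimension `√d`). Then for any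
operator `A` on `S' ⊗ S̄'`,
`E_W[Tr[Tr_{S̄'}[W A W†] Tr_{S̄'}[W A W†]]]
  = (√d/(d+1))·(Tr[Tr_{S̄'∪S_h}[A]²] + Tr[Tr_{S̄'/S_h̄}[A]²])`. -/
theorem haar_expectation_straddling_purity
    {α β γ δ : Type*} [Fintype α] [DecidableEq α] [Fintype β] [DecidableEq β]
    [Fintype γ] [DecidableEq γ] [Fintype δ] [DecidableEq δ]
    (hcard : Fintype.card γ = Fintype.card α)
    [MeasurableSpace (Matrix.unitaryGroup (α × γ) ℂ)]
    [BorelSpace (Matrix.unitaryGroup (α × γ) ℂ)]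
    (μ : Measure (Matrix.unitaryGroup (α × γ) ℂ))
    [μ.IsHaarMeasure] [IsProbabilityMeasure μ]
    (A : Matrix ((α × β) × (γ × δ)) ((α × β) × (γ × δ)) ℂ) :
    (∫ W : Matrix.unitaryGroup (α × γ) ℂ,
        (ptrSbar (embedStraddle (W : Matrix (α × γ) (α × γ) ℂ) * A *
            star (embedStraddle (W : Matrix (α × γ) (α × γ) ℂ))) *
          ptrSbar (embedStraddle (W : Matrix (α × γ) (α × γ) ℂ) * A *
            star (embedStraddle (W : Matrix (α × γ) (α × γ) ℂ)))).trace ∂μ)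
      = ((Fintype.card α : ℂ) / ((Fintype.card α : ℂ) ^ 2 + 1)) *
          ((ptrSbarCupSh A * ptrSbarCupSh A).trace +
            (ptrSbarDiffShbar A * ptrSbarDiffShbar A).trace) := by
  rcases isEmpty_or_nonempty α with hα | hα
  · simp [Matrix.trace, ptrSbar, Matrix.mul_apply, Fintype.sum_prod_type]
  have hγ : Nonempty γ := by
    rw [← Fintype.card_pos_iff, hcard]; exact Fintype.card_pos
  have hn : (Fintype.card α : ℂ) ≠ 0 := by simp [Fintype.card_ne_zero]
  -- the integrand as a linear functional of `conjTwo`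
  let φ : Matrix ((α × γ) × (α × γ)) ((α × γ) × (α × γ)) ℂ →ₗ[ℂ] ℂ :=
    (Matrix.traceLinearMap ((α × γ) × (α × γ)) ℂ ℂ) ∘ₗ
      LinearMap.mulRight ℂ (∑ b : β, ∑ b' : β, Matrix.kronecker (blk A b b') (blk A b' b))
  have hφ : ∀ M, φ M = ∑ b : β, ∑ b' : β,
      (M * Matrix.kronecker (blk A b b') (blk A b' b)).trace := by
    intro M
    simp only [φ, LinearMap.comp_apply, LinearMap.mulRight_apply, Matrix.traceLinearMap_apply,
      Finset.mul_sum, Matrix.trace_sum]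
  have hint : ∀ W : Matrix.unitaryGroup (α × γ) ℂ,
      (ptrSbar (embedStraddle (W : Matrix (α × γ) (α × γ) ℂ) * A *
            star (embedStraddle (W : Matrix (α × γ) (α × γ) ℂ))) *
          ptrSbar (embedStraddle (W : Matrix (α × γ) (α × γ) ℂ) * A *
            star (embedStraddle (W : Matrix (α × γ) (α × γ) ℂ)))).trace =
        φ (conjTwo (swapLeft α γ) W) := by
    intro W
    rw [purity_eq, hφ]
    refine Finset.sum_congr rfl fun b _ => Finset.sum_congr rfl fun b' _ => ?_
    rw [blk_conj, blk_conj, Matrix.mul_kronecker_mul, Matrix.mul_kronecker_mul, conjTwo,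
      ← mul_assoc, Matrix.trace_mul_comm]
    simp only [mul_assoc]
    rfl
  simp only [hint]
  have h1 : (swapLeft α γ).trace = (Fintype.card α : ℂ) ^ 3 := by
    rw [trace_swapLeft, hcard]; ring
  have h2 : (swapMat (α × γ) * swapLeft α γ).trace = (Fintype.card α : ℂ) ^ 3 := by
    rw [trace_swap_swapLeft, hcard]; ring
  rw [haar_second_moment μ (swapLeft α γ) _ h1 h2 Fintype.card_pos φ, hφ, hφ, cup_eq, diff_eq]
  simp only [one_mul]
  have h3 : ∀ b b' : β, (Matrix.kronecker (blk A b b') (blk A b' b)).trace =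
      (blk A b b').trace * (blk A b' b).trace := fun b b' => Matrix.trace_kronecker _ _
  have h4 : ∀ b b' : β, (swapMat (α × γ) * Matrix.kronecker (blk A b b') (blk A b' b)).trace =
      (blk A b b' * blk A b' b).trace := fun b b' => trace_swap_kron _ _
  simp only [h3, h4]
  congr 1
  rw [Fintype.card_prod, hcard]
  push_cast
  rw [show (Fintype.card α : ℂ) ^ 3 = (Fintype.card α * Fintype.card α : ℂ) * Fintype.card α by ring,
    mul_div_mul_left _ _ (mul_ne_zero hn hn), pow_two]
end
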